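/- arXiv:1304.0745 — 2 statements merged into one kernel-verified Lean document; each statement's English description precedes it below -/
import Mathlib

section
/- Let R be a polynomial ring over an algebraically closed field K and let I be an ideal of R of height two minimally generated by n quadrics. If some minimal prime of I is a linear prime, i.e., is generated by two linearly independent linear forms, then pd(R/I) ≤ 2n − 2. -/
open MvPolynomial Filter

universe u

/-- `PdLE R n M` means the `R`-module `M` has projective dimension at most `n`:
either `M` is projective (`n = 0`), or `M` is a quotient of a free module by a
submodule of projective dimension at most `n - 1`. -/
def PdLE (R : Type u) [CommRing R] : ℕ → (M : Type u) → [AddCommGroup M] → [Module R M] → Prop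
  | 0, M, _, _ => Module.Projective R M
  | n + 1, M, _, _ => ∃ (F : Type u) (_ : AddCommGroup F) (_ : Module R F),
      Module.Free R F ∧ ∃ f : F →ₗ[R] M, Function.Surjective f ∧ PdLE R n (LinearMap.ker f)

/-- The projective dimension of an `R`-module `M`, as an element of `ℕ∞`
(`⊤` if `M` has no finite free resolution). -/
noncomputable def projDim (R : Type u) [CommRing R] (M : Type u) [AddCommGroup M]
    [Module R M] : ℕ∞ :=
  sInf ((fun n : ℕ => (n : ℕ∞)) '' {n : ℕ | PdLE R n M})

/-- The height of an ideal: the infimum of the heights of the prime ideals containing it. -/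
noncomputable def idealHeight {R : Type*} [CommRing R] (I : Ideal R) : ℕ∞ :=
  ⨅ p ∈ {p : PrimeSpectrum R | I ≤ p.asIdeal}, Order.height p

/-- The length of a module, defined as the Krull dimension of its lattice of submodules. -/
noncomputable def moduleLength (R : Type u) [CommRing R] (M : Type u) [AddCommGroup M]
    [Module R M] : WithBot ℕ∞ :=
  Order.krullDim (Submodule R M)

/-- `IsHSMultiplicity R mx I e` asserts that the Hilbert–Samuel multiplicity of `R/I`
with respect to the ideal `mx` equals `e`: for `d = dim R/I` there is a polynomial `P`
of degree `d` with `e = d! · (leading coefficient of P)` such that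
`length (R/(I + mx^n)) = P(n)` for all large `n`. -/
def IsHSMultiplicity (R : Type u) [CommRing R] (mx I : Ideal R) (e : ℕ) : Prop :=
  ∃ (d : ℕ) (P : Polynomial ℚ),
    ringKrullDim (R ⧸ I) = (d : WithBot ℕ∞) ∧
    P.natDegree = d ∧
    (e : ℚ) = P.leadingCoeff * d.factorial ∧
    ∀ᶠ n : ℕ in Filter.atTop, ∃ k : ℕ, (k : ℚ) = P.eval (n : ℚ) ∧
      moduleLength R (R ⧸ (I ⊔ mx ^ n)) = ((k : ℕ∞) : WithBot ℕ∞)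

/-- A matrix over a `K`-algebra is `1`-generic if it has no generalized zero entry:
for every nonzero vectors `u`, `v` of scalars, `uᵀ M v ≠ 0`. -/
def OneGeneric (K : Type*) [Field K] {R : Type u} [CommRing R] [Algebra K R]
    {m l : ℕ} (M : Matrix (Fin m) (Fin l) R) : Prop :=
  ∀ (u : Fin m → K) (v : Fin l → K), u ≠ 0 → v ≠ 0 →
    ∑ i, ∑ j, algebraMap K R (u i * v j) * M i j ≠ 0

/-- The ideal of all `2 × 2` minors of a `2 × l` matrix. -/
def minors2 {R : Type u} [CommRing R] {l : ℕ} (M : Matrix (Fin 2) (Fin l) R) : Ideal R :=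
  Ideal.span (Set.range fun p : Fin l × Fin l => M 0 p.1 * M 1 p.2 - M 0 p.2 * M 1 p.1)

/-- The homogeneous maximal ideal of a polynomial ring. -/
noncomputable def maxIdeal (K : Type*) [Field K] (σ : Type*) : Ideal (MvPolynomial σ K) :=
  Ideal.span (Set.range (X : σ → MvPolynomial σ K))

/-- The ideal represented by minors by the `2 × (n+1)` matrix with first column `(x, y)ᵀ`
and remaining columns `(u j, v j)ᵀ`: it is generated by the `2 × 2` minors involving
the first column. -/
def repByMinors {R : Type u} [CommRing R] {n : ℕ} (x y : R) (u v : Fin n → R) : Ideal R :=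
  Ideal.span (Set.range fun j : Fin n => x * v j - y * u j)

open CategoryTheory in
/-- projective dimension at most `n`, unbundled. -/
def HP (R : Type u) [CommRing R] (n : ℕ) (M : Type u) [AddCommGroup M] [Module R M] : Prop :=
  HasProjectiveDimensionLE (ModuleCat.of R M) n

section HPbasic
open CategoryTheory
variable {R : Type u} [CommRing R] {A B C : Type u} [AddCommGroup A] [Module R A]
  [AddCommGroup B] [Module R B] [AddCommGroup C] [Module R C]

lemma HP.mono {n m : ℕ} (h : HP R n A) (hnm : n ≤ m) : HP R m A :=
  haveI : HasProjectiveDimensionLT (ModuleCat.of R A) (n+1) := h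
  hasProjectiveDimensionLT_of_ge _ (n+1) (m+1) (by lia)

lemma HP.equiv {n : ℕ} (e : A ≃ₗ[R] B) (h : HP R n A) : HP R n B :=
  haveI : HasProjectiveDimensionLT (ModuleCat.of R A) (n+1) := h
  hasProjectiveDimensionLT_of_iso e.toModuleIso (n+1)

lemma HP.zero_iff : HP R 0 A ↔ Module.Projective R A := by
  unfold HP
  rw [← projective_iff_hasProjectiveDimensionLE_zero, ← IsProjective.iff_projective]

lemma HP.of_proj [Module.Projective R A] (n : ℕ) : HP R n A :=
  (HP.zero_iff.2 ‹_›).mono (Nat.zero_le n)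

lemma ses_of (f : A →ₗ[R] B) (g : B →ₗ[R] C) (hf : Function.Injective f)
    (hg : Function.Surjective g) (hfg : Function.Exact f g) :
    ∃ h, (ShortComplex.mk (ModuleCat.ofHom f) (ModuleCat.ofHom g) h).ShortExact := by
  refine ⟨?_, ?_⟩
  · ext x
    exact hfg.apply_apply_eq_zero x
  · refine ShortComplex.ShortExact.mk' ?_ ?_ ?_
    · rw [ShortComplex.ShortExact.moduleCat_exact_iff_function_exact]
      exact hfg
    · exact (ModuleCat.mono_iff_injective _).2 hf
    · exact (ModuleCat.epi_iff_surjective _).2 hg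

lemma HP.mid {n : ℕ} (f : A →ₗ[R] B) (g : B →ₗ[R] C) (hf : Function.Injective f)
    (hg : Function.Surjective g) (hfg : Function.Exact f g) (h1 : HP R n A) (h3 : HP R n C) :
    HP R n B := by
  obtain ⟨h, hS⟩ := ses_of f g hf hg hfg
  exact hS.hasProjectiveDimensionLT_X₂ (n+1) h1 h3

lemma HP.right {n : ℕ} (f : A →ₗ[R] B) (g : B →ₗ[R] C) (hf : Function.Injective f)
    (hg : Function.Surjective g) (hfg : Function.Exact f g) (h1 : HP R n A) (h2 : HP R (n+1) B) :
    HP R (n+1) C := by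
  obtain ⟨h, hS⟩ := ses_of f g hf hg hfg
  exact hS.hasProjectiveDimensionLT_X₃ (n+1) h1 h2

lemma HP.left {n : ℕ} (f : A →ₗ[R] B) (g : B →ₗ[R] C) (hf : Function.Injective f)
    (hg : Function.Surjective g) (hfg : Function.Exact f g) (h2 : HP R n B) (h3 : HP R (n+1) C) :
    HP R n A := by
  obtain ⟨h, hS⟩ := ses_of f g hf hg hfg
  exact hS.hasProjectiveDimensionLT_X₁ (n+1) h2 h3

end HPbasic

/-- every module is a quotient of a free one -/
lemma exists_free_cover (R : Type u) [CommRing R] (M : Type u) [AddCommGroup M] [Module R M] :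
    ∃ f : (M →₀ R) →ₗ[R] M, Function.Surjective f :=
  ⟨Finsupp.linearCombination R id, Finsupp.linearCombination_id_surjective R M⟩

lemma HP.ker {R : Type u} [CommRing R] {n : ℕ} {F M : Type u} [AddCommGroup M] [Module R M]
    [AddCommGroup F] [Module R F] [Module.Projective R F] (f : F →ₗ[R] M)
    (hf : Function.Surjective f) (h : HP R (n+1) M) : HP R n (LinearMap.ker f) :=
  HP.left (LinearMap.ker f).subtype f (Submodule.subtype_injective _) hf
    (LinearMap.exact_subtype_ker_map f) (HP.of_proj _) h

lemma HP.of_ker {R : Type u} [CommRing R] {n : ℕ} {F M : Type u} [AddCommGroup M] [Module R M]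
    [AddCommGroup F] [Module R F] [Module.Projective R F] (f : F →ₗ[R] M)
    (hf : Function.Surjective f) (h : HP R n (LinearMap.ker f)) : HP R (n+1) M :=
  HP.right (LinearMap.ker f).subtype f (Submodule.subtype_injective _) hf
    (LinearMap.exact_subtype_ker_map f) h (HP.of_proj _)

open TensorProduct in
lemma HP.baseChange_aux {R S : Type u} [CommRing R] [CommRing S] [Algebra R S] [Module.Flat R S]
    {n : ℕ} {M F : Type u} [AddCommGroup M] [Module R M] [AddCommGroup F] [Module R F]
    [Module.Projective R F] (f : F →ₗ[R] M) (hf : Function.Surjective f)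
    (h : HP S n (S ⊗[R] (LinearMap.ker f))) : HP S (n+1) (S ⊗[R] M) := by
  refine HP.right ((LinearMap.ker f).subtype.baseChange S) (f.baseChange S) ?_ ?_ ?_ h
      (HP.of_proj _)
  · exact Module.Flat.lTensor_preserves_injective_linearMap _ (Submodule.subtype_injective _)
  · exact LinearMap.lTensor_surjective _ hf
  · have hex : Function.Exact (LinearMap.ker f).subtype f := LinearMap.exact_subtype_ker_map f
    exact lTensor_exact S hex hf

open TensorProduct in
lemma HP.baseChange {R S : Type u} [CommRing R] [CommRing S] [Algebra R S] [Module.Flat R S]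
    {n : ℕ} {M : Type u} [AddCommGroup M] [Module R M] (h : HP R n M) : HP S n (S ⊗[R] M) := by
  induction n generalizing M with
  | zero =>
    rw [HP.zero_iff] at h ⊢
    infer_instance
  | succ n ih =>
    obtain ⟨f, hf⟩ := exists_free_cover R M
    exact HP.baseChange_aux f hf (ih (HP.ker f hf h))

/-- all modules have pd at most `n`. -/
def GD (R : Type u) [CommRing R] (n : ℕ) : Prop :=
  ∀ (M : Type u) [AddCommGroup M] [Module R M], HP R n M

lemma GD.field (K : Type u) [Field K] : GD K 0 := fun _ _ _ => HP.of_proj _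

attribute [local instance] RingHomInvPair.of_ringEquiv in
lemma GD.ringEquiv {R S : Type u} [CommRing R] [CommRing S] (e : R ≃+* S) {n : ℕ} (h : GD R n) :
    GD S n := by
  intro M _ _
  let m : Module R M := Module.compHom M (e : R →+* S)
  have := h M
  unfold HP at this ⊢
  let e' : (ModuleCat.of R M) ≃ₛₗ[RingHomClass.toRingHom e] (ModuleCat.of S M) :=
    { toFun := fun x => x
      invFun := fun x => x
      map_add' := fun _ _ => rfl
      map_smul' := fun _ _ => rfl
      left_inv := fun _ => rfl
      right_inv := fun _ => rfl }
  exact ModuleCat.hasProjectiveDimensionLE_of_semiLinearEquiv e e' n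

section hilbert
open TensorProduct
open scoped Polynomial

variable {A : Type u} [CommRing A] (M : Type u) [AddCommGroup M] [Module A[X] M] [Module A M]
  [IsScalarTower A A[X] M]

/-- multiplication by X, A-linear -/
noncomputable def xmul : M →ₗ[A] M := LinearMap.restrictScalars A (LinearMap.lsmul A[X] M Polynomial.X)

noncomputable def hd : A[X] ⊗[A] M →ₗ[A[X]] A[X] ⊗[A] M :=
  LinearMap.lsmul A[X] _ Polynomial.X - (xmul (A := A) M).baseChange A[X]

noncomputable def heps : A[X] ⊗[A] M →ₗ[A[X]] M :=
  TensorProduct.AlgebraTensorModule.lift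
   ((LinearMap.lsmul A[X] M).flip.restrictScalars A).flip


@[simp] lemma heps_tmul (f : A[X]) (m : M) : heps (A := A) M (f ⊗ₜ m) = f • m := by
  simp [heps]

@[simp] lemma hd_tmul (f : A[X]) (m : M) : hd (A := A) M (f ⊗ₜ m) =
    (Polynomial.X * f) ⊗ₜ m - f ⊗ₜ ((Polynomial.X : A[X]) • m) := by
  simp [hd, xmul, TensorProduct.smul_tmul']

noncomputable def hh : A[X] ⊗[A] M →ₗ[A] A[X] ⊗[A] M :=
  TensorProduct.lift ((Polynomial.basisMonomials A).constr A (fun i =>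
    ∑ j ∈ Finset.range i, (TensorProduct.mk A A[X] M (Polynomial.X ^ (i - 1 - j))) ∘ₗ
      (xmul (A := A) M) ^ j))

lemma xmul_pow (j : ℕ) (m : M) : ((xmul (A := A) M) ^ j) m = (Polynomial.X ^ j : A[X]) • m := by
  induction j with
  | zero => simp
  | succ j ih => rw [pow_succ', Module.End.mul_apply, ih, pow_succ', mul_smul]; rfl

lemma hh_tmul (i : ℕ) (m : M) : hh (A := A) M ((Polynomial.X ^ i) ⊗ₜ m) =
    ∑ j ∈ Finset.range i, (Polynomial.X ^ (i - 1 - j) : A[X]) ⊗ₜ[A] ((Polynomial.X ^ j : A[X]) • m) := by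
  have : (Polynomial.X ^ i : A[X]) = Polynomial.basisMonomials A i := by
    simp [Polynomial.X_pow_eq_monomial]
  rw [hh, TensorProduct.lift.tmul, this, Module.Basis.constr_basis]
  simp [xmul_pow]

lemma hh_hd (z : A[X] ⊗[A] M) : hh M (hd M z) = z := by
  have : (hh (A := A) M) ∘ₗ (hd (A := A) M).restrictScalars A = LinearMap.id := by
    refine TensorProduct.ext ?_
    refine (Polynomial.basisMonomials A).ext fun i => ?_
    ext m
    simp only [Polynomial.coe_basisMonomials, LinearMap.compr₂ₛₗ_apply, TensorProduct.mk_apply,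
      LinearMap.comp_apply, LinearMap.restrictScalars_apply, hd_tmul, map_sub,
      ← Polynomial.X_pow_eq_monomial, ← pow_succ', hh_tmul, LinearMap.id_apply]
    rw [Finset.sum_range_succ']
    simp only [pow_zero, one_smul, add_tsub_cancel_right, Nat.sub_zero]
    rw [add_sub_right_comm, add_eq_right, sub_eq_zero]
    refine Finset.sum_congr rfl fun j _ => ?_
    rw [← mul_smul, ← pow_succ, Nat.sub_sub, add_comm 1 j]
  exact LinearMap.congr_fun this z

lemma hd_hh (z : A[X] ⊗[A] M) : hd M (hh M z) = z - 1 ⊗ₜ (heps M z) := by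
  have : (hd (A := A) M).restrictScalars A ∘ₗ (hh (A := A) M) = LinearMap.id -
      (TensorProduct.mk A A[X] M 1) ∘ₗ (heps (A := A) M).restrictScalars A := by
    refine TensorProduct.ext ?_
    refine (Polynomial.basisMonomials A).ext fun i => ?_
    ext m
    simp only [Polynomial.coe_basisMonomials, LinearMap.compr₂ₛₗ_apply, TensorProduct.mk_apply,
      LinearMap.comp_apply, LinearMap.restrictScalars_apply, hd_tmul, map_sum, LinearMap.sub_apply,
      ← Polynomial.X_pow_eq_monomial, ← pow_succ', hh_tmul, LinearMap.id_apply, heps_tmul]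
    have key := Finset.sum_range_sub' (fun j => (Polynomial.X ^ (i - j) : A[X]) ⊗ₜ[A]
      ((Polynomial.X ^ j : A[X]) • m)) i
    simp only [Nat.sub_zero, pow_zero, one_smul, Nat.sub_self] at key
    rw [← key]
    refine Finset.sum_congr rfl fun j hj => ?_
    have hj := Finset.mem_range.1 hj
    rw [show i - j = i - 1 - j + 1 by lia, show i - (j + 1) = i - 1 - j by lia]
    simp only [pow_succ', mul_smul]
  exact LinearMap.congr_fun this z

lemma GD.polynomial {n : ℕ} (h : GD A n) : GD A[X] (n+1) := by
  intro M _ _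
  letI : Module A M := Module.compHom M (Polynomial.C : A →+* A[X])
  haveI : IsScalarTower A A[X] M := ⟨fun a f m => by
    rw [Polynomial.smul_eq_C_mul, mul_smul]; rfl⟩
  have h1 : HP A[X] n (A[X] ⊗[A] M) := HP.baseChange (h M)
  refine HP.right (hd M) (heps M) ?_ ?_ ?_ h1 (h1.mono (Nat.le_succ n))
  · exact Function.LeftInverse.injective (hh_hd M)
  · intro m
    exact ⟨1 ⊗ₜ m, by simp⟩
  · intro z
    constructor
    · intro hz
      refine ⟨hh M z, ?_⟩
      rw [hd_hh, hz]; simp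
    · rintro ⟨w, rfl⟩
      induction w with
      | zero => simp
      | tmul f m => simp [mul_smul, smul_comm f (Polynomial.X : A[X]) m]
      | add a b ha hb => simp [ha, hb]

end hilbert

lemma GD.mvPolynomial (K : Type u) [Field K] (n : ℕ) : GD (MvPolynomial (Fin n) K) n := by
  induction n with
  | zero => exact (GD.field K).ringEquiv (MvPolynomial.isEmptyAlgEquiv K (Fin 0)).symm.toRingEquiv
  | succ n ih => exact (GD.polynomial ih).ringEquiv (MvPolynomial.finSuccEquiv K n).symm.toRingEquiv

lemma HP.quot_baseChange {S R M N : Type u} [CommRing S] [CommRing R] [Algebra S R] [Module.Flat S R]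
    [AddCommGroup M] [AddCommGroup N] [Module S M] [Module S N] [Module R N] [IsScalarTower S R N]
    {n : ℕ} (h : M →ₗ[S] N) (hb : IsBaseChange R h) (T : Set M)
    (hp : HP S n (M ⧸ Submodule.span S T)) : HP R n (N ⧸ Submodule.span R (h '' T)) := by
  let P := Submodule.span S T
  let Q := Submodule.span R (h '' T)
  have hPQ : P ≤ (Q.restrictScalars S).comap h := by
    refine Submodule.span_le.2 fun t ht => ?_
    exact Submodule.subset_span ⟨t, ht, rfl⟩
  let h3 : (M ⧸ P) →ₗ[S] (N ⧸ Q) := P.liftQ ((Q.mkQ.restrictScalars S) ∘ₗ h) (by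
    intro m hm
    rw [LinearMap.mem_ker]
    exact (Submodule.Quotient.mk_eq_zero Q).2 (hPQ hm))
  let f' : TensorProduct S R P →ₗ[R] N :=
    (TensorProduct.isBaseChange S P R).lift (h ∘ₗ P.subtype)
  have hf' : ∀ (r : R) (p : P), f' (r ⊗ₜ p) = r • h p := by
    intro r p
    have h1 : f' (1 ⊗ₜ p) = h p := (TensorProduct.isBaseChange S P R).lift_eq (h ∘ₗ P.subtype) p
    rw [← h1, ← map_smul, TensorProduct.smul_tmul', smul_eq_mul, mul_one]
  have hr : LinearMap.range f' = Q := by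
    apply le_antisymm
    · rintro _ ⟨z, rfl⟩
      induction z with
      | zero => simp
      | tmul r p => rw [hf']; exact Q.smul_mem _ (hPQ p.2)
      | add a b ha hb => rw [map_add]; exact Q.add_mem ha hb
    · refine Submodule.span_le.2 ?_
      rintro _ ⟨t, ht, rfl⟩
      exact ⟨1 ⊗ₜ ⟨t, Submodule.subset_span ht⟩, by rw [hf']; simp⟩
  have := IsBaseChange.of_right_exact R (TensorProduct.mk S R P 1) h h3
    (f := P.subtype) (g := P.mkQ) (f' := f') (g' := Q.mkQ)
    (by ext p; simp [hf']) (by ext m; rfl)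
    (TensorProduct.isBaseChange S P R) hb (LinearMap.exact_subtype_mkQ P) P.mkQ_surjective
    (by rw [LinearMap.exact_iff, hr, Submodule.ker_mkQ]) Q.mkQ_surjective
  exact HP.equiv this.equiv (HP.baseChange hp)

section LF
variable {K : Type u} [Field K] {N : ℕ}

/-- linear forms -/
noncomputable def LF (K : Type u) [Field K] (N : ℕ) : (Fin N → K) →ₗ[K] MvPolynomial (Fin N) K :=
  Fintype.linearCombination K (X : Fin N → MvPolynomial (Fin N) K)

lemma LF_apply (c : Fin N → K) : LF K N c = ∑ i, c i • (X i : MvPolynomial (Fin N) K) := by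
  simp [LF, Fintype.linearCombination_apply]

lemma LF_single (i : Fin N) : LF K N (Pi.single i 1) = X i := by
  simp [LF]

lemma LF_injective : Function.Injective (LF K N) := by
  rw [injective_iff_map_eq_zero]
  intro c hc
  ext i
  have := congrArg (coeff (Finsupp.single i 1)) hc
  rw [LF_apply, coeff_sum, Finset.sum_eq_single i] at this
  · simpa [coeff_X] using this
  · intro j _ hj
    rw [coeff_smul, coeff_X, if_neg]
    · simp
    · simp [Finsupp.single_left_inj, hj]
  · simp

lemma exists_LF {f : MvPolynomial (Fin N) K} (hf : f.IsHomogeneous 1) : ∃ c, LF K N c = f := by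
  refine ⟨fun i => coeff (Finsupp.single i 1) f, ?_⟩
  ext d
  rw [LF_apply, coeff_sum]
  by_cases hd : d.degree = 1
  · obtain ⟨i, rfl⟩ : ∃ i, d = Finsupp.single i 1 := by
      have hne : d ≠ 0 := by rintro rfl; simp at hd
      obtain ⟨i, hi⟩ := Finsupp.ne_iff.1 hne
      refine ⟨i, ?_⟩
      have h1 : d = Finsupp.single i 1 + (d - Finsupp.single i 1) := by
        rw [add_tsub_cancel_of_le]
        rw [Finsupp.single_le_iff]
        simpa [Nat.one_le_iff_ne_zero] using hi
      have h2 := congrArg Finsupp.degree h1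
      rw [map_add, hd, Finsupp.degree_single] at h2
      have h3 : (d - Finsupp.single i 1).degree = 0 := by lia
      rw [Finsupp.degree_eq_zero_iff] at h3
      rw [h3, add_zero] at h1
      exact h1
    rw [Finset.sum_eq_single i]
    · simp [coeff_X]
    · intro j _ hj
      rw [coeff_smul, coeff_X, if_neg]
      · simp
      · simp [Finsupp.single_left_inj, hj]
    · simp
  · rw [hf.coeff_eq_zero (by simpa using hd)]
    refine Finset.sum_eq_zero fun i _ => ?_
    rw [coeff_smul, coeff_X, if_neg]
    · simp
    · rintro rfl; simp at hd

lemma LF_homog (c : Fin N → K) : (LF K N c).IsHomogeneous 1 := by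
  rw [LF_apply]
  refine IsHomogeneous.sum _ _ _ fun i _ => ?_
  rw [smul_eq_C_mul]
  simpa using (isHomogeneous_C _ (c i)).mul (isHomogeneous_X K i)

/-- substitution: endomorphism / hom induced by linear map on linear forms -/
noncomputable def lsub {A : Type*} [CommRing A] [Algebra K A] (π : (Fin N → K) →ₗ[K] A) :
    MvPolynomial (Fin N) K →ₐ[K] A := aeval fun i => π (Pi.single i 1)

lemma lsub_LF {A : Type*} [CommRing A] [Algebra K A] (π : (Fin N → K) →ₗ[K] A) (c : Fin N → K) :
    lsub π (LF K N c) = π c := by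
  have : (lsub π).toLinearMap ∘ₗ LF K N = π := by
    refine LinearMap.pi_ext' fun i => ?_
    ext
    simp [LF_single, lsub]
  exact LinearMap.congr_fun this c

lemma algHom_ext_LF {A : Type*} [CommRing A] [Algebra K A] {f g : MvPolynomial (Fin N) K →ₐ[K] A}
    (h : ∀ c, f (LF K N c) = g (LF K N c)) : f = g := by
  ext i
  rw [← LF_single]; exact h _

/-- the polynomial ring on a basis -/
noncomputable def basisEquiv {ι : Type*} (b : Module.Basis ι K (Fin N → K)) :
    MvPolynomial ι K ≃ₐ[K] MvPolynomial (Fin N) K :=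
  AlgEquiv.ofAlgHom (aeval fun i => LF K N (b i)) (lsub (b.constr K (X : ι → MvPolynomial ι K)))
    (by
      apply algHom_ext_LF
      intro c
      rw [AlgHom.comp_apply, lsub_LF, AlgHom.id_apply]
      have : (aeval (R := K) fun i => LF K N (b i)).toLinearMap ∘ₗ
          (b.constr K (X : ι → MvPolynomial ι K)) = LF K N := by
        refine b.ext fun i => ?_
        simp
      exact LinearMap.congr_fun this c)
    (by ext i; simp [lsub_LF])

lemma flat_aeval {ι : Type*} (v : ι → Fin N → K) (hv : LinearIndependent K v) :
    (aeval (R := K) fun i => LF K N (v i)).toRingHom.Flat := by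
  obtain ⟨κ, b, hb⟩ : ∃ (κ : Type u) (b : Module.Basis (ι ⊕ κ) K (Fin N → K)), ∀ i, b (Sum.inl i) = v i :=
    ⟨_, Module.Basis.sumExtend hv, fun i => by simp [Module.Basis.sumExtend]; rfl⟩
  have h0 : (rename Sum.inr : MvPolynomial ι K →ₐ[K] MvPolynomial (κ ⊕ ι) K).toRingHom =
      ((sumAlgEquiv K κ ι).symm : _ →+* _).comp
        (algebraMap (MvPolynomial ι K) (MvPolynomial κ (MvPolynomial ι K))) := by
    refine MvPolynomial.ringHom_ext ?_ ?_
    · intro r; simp [algebraMap_eq]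
    · intro i; simp [algebraMap_eq]
  have h1 : ((basisEquiv (b.reindex (Equiv.sumComm ι κ)) : _ →+* _).comp
      (rename Sum.inr : MvPolynomial ι K →ₐ[K] MvPolynomial (κ ⊕ ι) K).toRingHom) =
    (aeval (R := K) fun i => LF K N (v i)).toRingHom := by
    refine MvPolynomial.ringHom_ext ?_ ?_
    · intro r
      simp
      exact (basisEquiv (b.reindex (Equiv.sumComm ι κ))).commutes r
    · intro i; simp [basisEquiv, hb]
  rw [← h1]
  refine RingHom.Flat.comp ?_ ?_
  · rw [h0]
    refine RingHom.Flat.comp ?_ ?_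
    · rw [RingHom.flat_algebraMap_iff]; infer_instance
    · exact RingHom.Flat.of_bijective (sumAlgEquiv K κ ι).symm.bijective
  · exact RingHom.Flat.of_bijective (AlgEquiv.bijective _)

end LF

lemma HP.gen1 {S R : Type u} [CommRing S] [CommRing R] [Algebra S R] [Module.Flat S R] {q : ℕ}
    (hG : GD S q) (T : Set R) (hT : ∀ t ∈ T, ∃ s : S, algebraMap S R s = t) :
    HP R q (R ⧸ Submodule.span R T) := by
  have : T = Algebra.linearMap S R '' (Algebra.linearMap S R ⁻¹' T) := by
    rw [Set.image_preimage_eq_of_subset]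
    intro t ht
    obtain ⟨s, hs⟩ := hT t ht
    exact ⟨s, hs⟩
  rw [this]
  exact HP.quot_baseChange _ (IsBaseChange.linearMap S R) _ (hG _)

lemma HP.gen2 {S R : Type u} [CommRing S] [CommRing R] [Algebra S R] [Module.Flat S R] {q : ℕ}
    (hG : GD S q) (T : Set (R × R))
    (hT : ∀ t ∈ T, ∃ s s' : S, (algebraMap S R s, algebraMap S R s') = t) :
    HP R q ((R × R) ⧸ Submodule.span R T) := by
  let h := (Algebra.linearMap S R).prodMap (Algebra.linearMap S R)
  have : T = h '' (h ⁻¹' T) := by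
    rw [Set.image_preimage_eq_of_subset]
    intro t ht
    obtain ⟨s, s', hs⟩ := hT t ht
    exact ⟨(s, s'), hs⟩
  rw [this]
  exact HP.quot_baseChange _ (IsBaseChange.prodMap _ _ (IsBaseChange.linearMap S R)
    (IsBaseChange.linearMap S R)) _ (hG _)

section LF2
variable {K : Type u} [Field K] {N : ℕ}

lemma mem_range_aeval {ι : Type*} (U : Submodule K (Fin N → K)) (b : Module.Basis ι K U)
    {c : Fin N → K} (hc : c ∈ U) :
    ∃ s : MvPolynomial ι K, (aeval (R := K) fun i => LF K N (b i)).toRingHom s = LF K N c := by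
  have : (aeval (R := K) fun i => LF K N (b i)).toLinearMap ∘ₗ
          (b.constr K (X : ι → MvPolynomial ι K)) = LF K N ∘ₗ U.subtype := by
    refine b.ext fun i => ?_
    simp
  exact ⟨_, LinearMap.congr_fun this ⟨c, hc⟩⟩

lemma HP_lin1 (U : Submodule K (Fin N → K)) (Z : Set (Fin N → K)) (hZ : ∀ z ∈ Z, z ∈ U) :
    HP (MvPolynomial (Fin N) K) (Module.finrank K U)
      (MvPolynomial (Fin N) K ⧸ Ideal.span (LF K N '' Z)) := by
  let b := Module.finBasis K U
  let φ := (aeval (R := K) fun i => LF K N (b i)).toRingHom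
  have hφ : φ.Flat := flat_aeval (fun i => (b i : Fin N → K))
    (b.linearIndependent.map' U.subtype (Submodule.ker_subtype U))
  letI := φ.toAlgebra
  haveI : Module.Flat (MvPolynomial (Fin (Module.finrank K U)) K) (MvPolynomial (Fin N) K) := hφ
  refine HP.gen1 (GD.mvPolynomial K (Module.finrank K U)) _ ?_
  rintro _ ⟨z, hz, rfl⟩
  exact mem_range_aeval U b (hZ z hz)

/-- pairs of linear forms -/
noncomputable def LL (K : Type u) [Field K] (N : ℕ) : (Fin N → K) × (Fin N → K) →ₗ[K]
    MvPolynomial (Fin N) K × MvPolynomial (Fin N) K := (LF K N).prodMap (LF K N)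

@[simp] lemma LL_apply (z : (Fin N → K) × (Fin N → K)) : LL K N z = (LF K N z.1, LF K N z.2) := rfl

/-- the relation module -/
noncomputable def RE (Z : Set ((Fin N → K) × (Fin N → K))) :
    Submodule (MvPolynomial (Fin N) K) (MvPolynomial (Fin N) K × MvPolynomial (Fin N) K) :=
  Submodule.span _ (LL K N '' Z)

lemma HP_lin2 (U : Submodule K (Fin N → K)) (Z : Set ((Fin N → K) × (Fin N → K)))
    (hZ : ∀ z ∈ Z, z.1 ∈ U ∧ z.2 ∈ U) :
    HP (MvPolynomial (Fin N) K) (Module.finrank K U)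
      ((MvPolynomial (Fin N) K × MvPolynomial (Fin N) K) ⧸ RE Z) := by
  let b := Module.finBasis K U
  let φ := (aeval (R := K) fun i => LF K N (b i)).toRingHom
  have hφ : φ.Flat := flat_aeval (fun i => (b i : Fin N → K))
    (b.linearIndependent.map' U.subtype (Submodule.ker_subtype U))
  letI := φ.toAlgebra
  haveI : Module.Flat (MvPolynomial (Fin (Module.finrank K U)) K) (MvPolynomial (Fin N) K) := hφ
  refine HP.gen2 (GD.mvPolynomial K (Module.finrank K U)) _ ?_
  rintro _ ⟨z, hz, rfl⟩
  obtain ⟨s, hs⟩ := mem_range_aeval U b (hZ z hz).1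
  obtain ⟨s', hs'⟩ := mem_range_aeval U b (hZ z hz).2
  exact ⟨s, s', Prod.ext hs hs'⟩

lemma lin_ker (W : Submodule K (Fin N → K)) :
    ∃ φ : MvPolynomial (Fin N) K →ₐ[K] MvPolynomial (Fin N) K,
      RingHom.ker φ = Ideal.span (LF K N '' W) ∧ ∀ v, φ (LF K N v) = 0 ↔ v ∈ W := by
  obtain ⟨s, hs⟩ := LinearMap.exists_rightInverse_of_surjective W.mkQ
    (LinearMap.range_eq_top.2 W.mkQ_surjective)
  let π : (Fin N → K) →ₗ[K] (Fin N → K) := s ∘ₗ W.mkQ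
  have h1 : ∀ v, v - π v ∈ W := fun v => by
    rw [← Submodule.Quotient.mk_eq_zero, Submodule.Quotient.mk_sub, sub_eq_zero]
    exact (LinearMap.congr_fun hs (W.mkQ v)).symm
  have h2 : ∀ v ∈ W, π v = 0 := fun v hv => by
    have : W.mkQ v = 0 := (Submodule.Quotient.mk_eq_zero W).2 hv
    simp [π, this]
  let φ := lsub (LF K N ∘ₗ π)
  have h3 : ∀ v, φ (LF K N v) = 0 ↔ v ∈ W := fun v => by
    rw [lsub_LF, LinearMap.comp_apply, map_eq_zero_iff _ LF_injective]
    refine ⟨fun h => ?_, h2 v⟩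
    have := h1 v
    rwa [h, sub_zero] at this
  refine ⟨φ, le_antisymm ?_ ?_, h3⟩
  · have h4 : (Ideal.Quotient.mkₐ K (Ideal.span (LF K N '' (W : Set (Fin N → K))))).comp φ =
        Ideal.Quotient.mkₐ K _ := by
      refine algHom_ext_LF fun c => ?_
      rw [AlgHom.comp_apply, lsub_LF]
      refine ((Ideal.Quotient.mk_eq_mk_iff_sub_mem _ _).2 ?_).symm
      rw [LinearMap.comp_apply, ← map_sub]
      exact Ideal.subset_span ⟨_, h1 c, rfl⟩
    intro f hf
    have := AlgHom.congr_fun h4 f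
    rw [AlgHom.comp_apply, (show φ f = 0 from hf), map_zero] at this
    exact Ideal.Quotient.eq_zero_iff_mem.1 this.symm
  · refine Ideal.span_le.2 ?_
    rintro _ ⟨w, hw, rfl⟩
    exact (h3 w).2 hw

lemma lin_prime (W : Submodule K (Fin N → K)) :
    (Ideal.span (LF K N '' W)).IsPrime := by
  obtain ⟨φ, h, -⟩ := lin_ker W
  rw [← h]
  exact RingHom.ker_isPrime φ

lemma lin_mem {W : Submodule K (Fin N → K)} {v : Fin N → K} :
    LF K N v ∈ Ideal.span (LF K N '' W) ↔ v ∈ W := by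
  obtain ⟨φ, h, h'⟩ := lin_ker W
  rw [← h, ← h', RingHom.mem_ker]
end LF2

section seqs
variable {R : Type u} [CommRing R]

lemma HP.seq1 (Q : Submodule R (R × R)) {n : ℕ} (h : HP R n ((R × R) ⧸ Q))
    (h' : HP R (n+1) (R ⧸ Q.map (LinearMap.snd R R R))) :
    HP R n (R ⧸ Q.comap (LinearMap.inl R R R)) := by
  let J := Q.comap (LinearMap.inl R R R)
  let P := Q.map (LinearMap.snd R R R)
  refine HP.left (J.mapQ Q (LinearMap.inl R R R) le_rfl)
    (Q.mapQ P (LinearMap.snd R R R) (Submodule.map_le_iff_le_comap.1 le_rfl)) ?_ ?_ ?_ h h'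
  · rw [← LinearMap.ker_eq_bot, Submodule.ker_mapQ]
    simp [J, Submodule.mkQ_map_self]
  · rw [← LinearMap.range_eq_top, Submodule.range_mapQ, LinearMap.range_eq_top.2 Prod.snd_surjective]
    simp
  · intro z
    obtain ⟨⟨a, b⟩, rfl⟩ := Q.mkQ_surjective z
    rw [Submodule.mkQ_apply, Submodule.mapQ_apply, Submodule.Quotient.mk_eq_zero]
    constructor
    · rintro ⟨⟨c, d⟩, hc, hd⟩
      replace hd : d = b := hd
      subst hd
      refine ⟨J.mkQ (a - c), ?_⟩
      rw [Submodule.mkQ_apply, Submodule.mapQ_apply, Submodule.Quotient.eq]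
      have : (LinearMap.inl R R R (a - c) - (a, d)) = -(c, d) := by simp
      rw [this]
      exact Q.neg_mem hc
    · rintro ⟨w, hw⟩
      obtain ⟨f, rfl⟩ := J.mkQ_surjective w
      rw [Submodule.mkQ_apply, Submodule.mapQ_apply, Submodule.Quotient.eq] at hw
      exact ⟨_, Q.neg_mem hw, by simp⟩

lemma HP.seq2 (Q : Submodule R (R × R)) (t : R × R) (hJ : ∀ f : R, f • t ∈ Q ↔ (f, (0 : R)) ∈ Q)
    {n : ℕ} (h : HP R n (R ⧸ Q.comap (LinearMap.inl R R R))) (h' : HP R (n+1) ((R × R) ⧸ Q)) :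
    HP R (n+1) ((R × R) ⧸ (Q ⊔ Submodule.span R {t})) := by
  let J := Q.comap (LinearMap.inl R R R)
  let P := Q ⊔ Submodule.span R {t}
  have hJt : J = Q.comap (LinearMap.toSpanSingleton R _ t) := by
    ext f
    exact (hJ f).symm
  refine HP.right (J.mapQ Q (LinearMap.toSpanSingleton R _ t) hJt.le)
    (Q.mapQ P LinearMap.id (le_sup_left)) ?_ ?_ ?_ h h'
  · rw [← LinearMap.ker_eq_bot, Submodule.ker_mapQ, ← hJt, Submodule.mkQ_map_self]
  · rw [← LinearMap.range_eq_top, Submodule.range_mapQ]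
    simp
  · intro z
    obtain ⟨z, rfl⟩ := Q.mkQ_surjective z
    rw [Submodule.mkQ_apply, Submodule.mapQ_apply, Submodule.Quotient.mk_eq_zero]
    constructor
    · intro hz
      obtain ⟨q, hq, w, hw, hqw⟩ := Submodule.mem_sup.1 hz
      obtain ⟨f, rfl⟩ := Submodule.mem_span_singleton.1 hw
      refine ⟨J.mkQ f, ?_⟩
      rw [Submodule.mkQ_apply, Submodule.mapQ_apply, Submodule.Quotient.eq]
      have : (LinearMap.toSpanSingleton R (R × R) t) f - z = - q := by
        rw [LinearMap.toSpanSingleton_apply]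
        rw [LinearMap.id_apply] at hqw
        rw [← hqw]; abel
      rw [this]
      exact Q.neg_mem hq
    · rintro ⟨w, hw⟩
      obtain ⟨f, rfl⟩ := J.mkQ_surjective w
      rw [Submodule.mkQ_apply, Submodule.mapQ_apply, Submodule.Quotient.eq] at hw
      rw [LinearMap.toSpanSingleton_apply] at hw
      rw [LinearMap.id_apply]
      refine Submodule.mem_sup.2 ⟨_, Q.neg_mem hw, f • t, Submodule.mem_span_singleton.2 ⟨f, rfl⟩, ?_⟩
      abel
end seqs

section LF3
variable {K : Type u} [Field K] {N : ℕ}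

lemma span_LF_span (Z : Set (Fin N → K)) :
    Ideal.span (LF K N '' (Submodule.span K Z : Set (Fin N → K))) = Ideal.span (LF K N '' Z) := by
  apply le_antisymm
  · refine Ideal.span_le.2 ?_
    rintro _ ⟨z, hz, rfl⟩
    have : Submodule.span K Z ≤ ((Ideal.span (LF K N '' Z)).restrictScalars K).comap (LF K N) :=
      Submodule.span_le.2 fun z hz => Ideal.subset_span ⟨z, hz, rfl⟩
    exact this hz
  · exact Ideal.span_mono (Set.image_mono Submodule.subset_span)

lemma RE_span (Z : Set ((Fin N → K) × (Fin N → K))) :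
    RE (Submodule.span K Z : Set ((Fin N → K) × (Fin N → K))) = RE Z := by
  apply le_antisymm
  · refine Submodule.span_le.2 ?_
    rintro _ ⟨z, hz, rfl⟩
    have : Submodule.span K Z ≤ ((RE Z).restrictScalars K).comap (LL K N) :=
      Submodule.span_le.2 fun z hz => Submodule.subset_span ⟨z, hz, rfl⟩
    exact this hz
  · exact Submodule.span_mono (Set.image_mono Submodule.subset_span)

lemma LL_mem_RE {Z : Set ((Fin N → K) × (Fin N → K))} {z} (hz : z ∈ Z) : LL K N z ∈ RE Z :=
  Submodule.subset_span ⟨z, hz, rfl⟩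

lemma koszul (p : ℕ) (u v : Fin p → Fin N → K) (hv : LinearIndependent K v)
    (r : Fin p → MvPolynomial (Fin N) K) (h : ∑ j, r j * LF K N (v j) = 0) :
    ((0, ∑ j, r j * LF K N (u j)) : MvPolynomial (Fin N) K × MvPolynomial (Fin N) K) ∈
      RE (Set.range fun j => (u j, v j)) := by
  induction p with
  | zero => simp [Prod.mk_zero_zero]
  | succ p ih =>
    rw [Fin.sum_univ_castSucc] at h ⊢
    have hv' : LinearIndependent K (fun j : Fin p => v j.castSucc) :=
      hv.comp _ (Fin.castSucc_injective p)
    let W := Submodule.span K (Set.range fun j : Fin p => v j.castSucc)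
    have hW : Ideal.span (LF K N '' W) =
        Ideal.span (Set.range fun j : Fin p => LF K N (v j.castSucc)) := by
      rw [span_LF_span, ← Set.range_comp]; rfl
    have hlast : v (Fin.last p) ∉ W := by
      have := (linearIndependent_fin_succ'.1 hv).2
      exact this
    have hmem : r (Fin.last p) * LF K N (v (Fin.last p)) ∈ Ideal.span (LF K N '' W) := by
      rw [eq_neg_of_add_eq_zero_right h, hW]
      refine Ideal.neg_mem_iff _ |>.2 (Ideal.sum_mem _ fun j _ => Ideal.mul_mem_left _ _ ?_)
      exact Ideal.subset_span ⟨j, rfl⟩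
    have hr : r (Fin.last p) ∈ Ideal.span (LF K N '' W) :=
      ((lin_prime W).mem_or_mem hmem).resolve_right fun h => hlast (lin_mem.1 h)
    rw [hW] at hr
    obtain ⟨s, hs⟩ := Ideal.mem_span_range_iff_exists_fun.1 hr
    have key := ih (fun j => u j.castSucc) (fun j => v j.castSucc) hv'
      (fun j => r j.castSucc + s j * LF K N (v (Fin.last p))) (by
        rw [← h, ← hs, Finset.sum_mul, ← Finset.sum_add_distrib]
        exact Finset.sum_congr rfl fun j _ => by ring)
    have hle : RE (Set.range fun j : Fin p => (u j.castSucc, v j.castSucc)) ≤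
        RE (Set.range fun j => (u j, v j)) := by
      refine Submodule.span_mono (Set.image_mono ?_)
      rintro _ ⟨j, rfl⟩
      exact ⟨j.castSucc, rfl⟩
    have hk2 : ∀ j : Fin p, ((0, LF K N (v j.castSucc) * LF K N (u (Fin.last p)) -
        LF K N (v (Fin.last p)) * LF K N (u j.castSucc)) :
        MvPolynomial (Fin N) K × MvPolynomial (Fin N) K) ∈ RE (Set.range fun j => (u j, v j)) := by
      intro j
      have h1 := LL_mem_RE (Set.mem_range_self (f := fun j => (u j, v j)) j.castSucc)
      have h2 := LL_mem_RE (Set.mem_range_self (f := fun j => (u j, v j)) (Fin.last p))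
      have := Submodule.sub_mem _ (Submodule.smul_mem _ (LF K N (u (Fin.last p))) h1)
        (Submodule.smul_mem _ (LF K N (u j.castSucc)) h2)
      convert! this using 1
      ext1
      · simp; ring
      · simp; ring
    have := Submodule.add_mem _ (hle key) (Submodule.sum_mem _ fun j (_ : j ∈ Finset.univ) =>
      Submodule.smul_mem _ (s j) (hk2 j))
    convert! this using 1
    ext1
    · simp [Prod.fst_sum]
    · simp only [Prod.snd_add, Prod.snd_sum, Prod.smul_snd, smul_eq_mul, ← hs, ← Finset.sum_add_distrib,
        Finset.sum_mul]
      exact Finset.sum_congr rfl fun j _ => by ring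

lemma good_swap (E : Submodule K ((Fin N → K) × (Fin N → K)))
    (hE : ∀ w, (w, 0) ∈ E → ((0 : Fin N → K), w) ∈ E) (f : MvPolynomial (Fin N) K)
    (hf : (f, (0 : MvPolynomial (Fin N) K)) ∈ RE (E : Set ((Fin N → K) × (Fin N → K)))) :
    ((0 : MvPolynomial (Fin N) K), f) ∈ RE (E : Set ((Fin N → K) × (Fin N → K))) := by
  let G := E.map (LinearMap.snd K (Fin N → K) (Fin N → K))
  let b := Module.finBasis K G
  have hb : ∀ j, ∃ u, (u, (b j : Fin N → K)) ∈ E := by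
    intro j
    obtain ⟨⟨u, v⟩, h, h'⟩ := (b j).2
    exact ⟨u, by rw [← h']; exact h⟩
  choose u hu using hb
  let A := E.comap (LinearMap.inl K (Fin N → K) (Fin N → K))
  have hle : RE (E : Set ((Fin N → K) × (Fin N → K))) ≤
      Submodule.span (MvPolynomial (Fin N) K) (Set.range fun j => LL K N (u j, b j)) ⊔
      Submodule.map (LinearMap.inl (MvPolynomial (Fin N) K) _ (MvPolynomial (Fin N) K))
        (Ideal.span (LF K N '' A)) := by
    refine Submodule.span_le.2 ?_
    rintro _ ⟨⟨c, d⟩, hz, rfl⟩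
    let d' : G := ⟨d, ⟨(c, d), hz, rfl⟩⟩
    have hd : ∑ j, b.repr d' j • (b j : Fin N → K) = d := by
      have := congrArg G.subtype (b.sum_repr d')
      rw [map_sum] at this
      exact this
    have h0 : (c - ∑ j, b.repr d' j • u j, (0 : Fin N → K)) ∈ E := by
      have h1 := E.sub_mem hz (E.sum_mem fun j (_ : j ∈ Finset.univ) => E.smul_mem (b.repr d' j) (hu j))
      convert! h1 using 1
      ext1
      · simp [Prod.fst_sum]
      · simp [Prod.snd_sum, hd]
    have h2 : LL K N (c, d) = ∑ j, b.repr d' j • LL K N (u j, b j) +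
        LL K N (c - ∑ j, b.repr d' j • u j, (0 : Fin N → K)) := by
      simp only [← map_smul, ← map_sum, ← map_add]
      congr 1
      ext1
      · simp [Prod.fst_sum]
      · simp [Prod.snd_sum, hd]
    rw [h2]
    refine Submodule.add_mem_sup ?_ ?_
    · refine Submodule.sum_mem _ fun j _ => ?_
      rw [← algebraMap_smul (MvPolynomial (Fin N) K)]
      exact Submodule.smul_mem _ _ (Submodule.subset_span ⟨j, rfl⟩)
    · exact ⟨LF K N (c - ∑ j, b.repr d' j • u j), Ideal.subset_span ⟨_, h0, rfl⟩, by simp⟩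
  obtain ⟨q, hq, w, ⟨h, hh, rfl⟩, hqw⟩ := Submodule.mem_sup.1 (hle hf)
  obtain ⟨r, rfl⟩ := (Submodule.mem_span_range_iff_exists_fun _).1 hq
  have e1 := congrArg Prod.fst hqw
  have e2 := congrArg Prod.snd hqw
  simp [Prod.fst_sum, Prod.snd_sum] at e1 e2
  have k1 := koszul _ u (fun j => (b j : Fin N → K))
    (b.linearIndependent.map' G.subtype (Submodule.ker_subtype G)) r e2
  have k2 : RE (Set.range fun j => (u j, (b j : Fin N → K))) ≤ RE (E : Set ((Fin N → K) × (Fin N → K))) := by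
    refine Submodule.span_mono (Set.image_mono ?_)
    rintro _ ⟨j, rfl⟩
    exact hu j
  have k3 : Ideal.span (LF K N '' A) ≤ (RE (E : Set ((Fin N → K) × (Fin N → K)))).comap
      (LinearMap.inr _ _ _) := by
    refine Ideal.span_le.2 ?_
    rintro _ ⟨a, ha, rfl⟩
    have := LL_mem_RE (hE a ha)
    simpa using this
  have := Submodule.add_mem _ (k2 k1) (k3 hh)
  convert! this using 1
  ext1
  · simp
  · simp [← e1]
end LF3

section fresh
variable {K : Type u} [Field K] {N : ℕ}

/-- substitution making a variable fresh -/
noncomputable def fr (θ : (Fin N → K) →ₗ[K] K) (t : Fin N → K) :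
    MvPolynomial (Fin N) K →ₐ[K] Polynomial (MvPolynomial (Fin N) K) :=
  lsub ((Algebra.linearMap (MvPolynomial (Fin N) K) (Polynomial (MvPolynomial (Fin N) K))).restrictScalars K
    ∘ₗ LF K N ∘ₗ (LinearMap.id - θ.smulRight t) +
    θ.smulRight (Polynomial.X : Polynomial (MvPolynomial (Fin N) K)))

lemma fr_LF (θ : (Fin N → K) →ₗ[K] K) (t c : Fin N → K) :
    fr θ t (LF K N c) = Polynomial.C (LF K N (c - θ c • t)) + θ c • Polynomial.X := by
  rw [fr, lsub_LF]
  rfl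

lemma fr_eval (θ : (Fin N → K) →ₗ[K] K) (t : Fin N → K) (f : MvPolynomial (Fin N) K) :
    (fr θ t f).eval (LF K N t) = f := by
  have : ((Polynomial.aeval (R := MvPolynomial (Fin N) K) (LF K N t)).restrictScalars K).comp (fr θ t) =
      AlgHom.id K _ := by
    refine algHom_ext_LF fun c => ?_
    rw [AlgHom.comp_apply, fr_LF]
    simp [Polynomial.aeval_def, Polynomial.eval₂_eq_eval_map, Polynomial.eval_smul]
  have h := AlgHom.congr_fun this f
  simpa [Polynomial.aeval_def, Polynomial.eval₂_eq_eval_map] using h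

lemma fr_coeff_mem (θ : (Fin N → K) →ₗ[K] K) (t : Fin N → K)
    (Z : Set ((Fin N → K) × (Fin N → K))) (h1 : ∀ z ∈ Z, θ z.1 = 0) (h2 : ∀ z ∈ Z, θ z.2 = 0)
    (z : MvPolynomial (Fin N) K × MvPolynomial (Fin N) K) (hz : z ∈ RE Z) (i : ℕ) :
    ((fr θ t z.1).coeff i, (fr θ t z.2).coeff i) ∈ RE Z := by
  induction hz using Submodule.span_induction generalizing i with
  | mem z hz =>
    obtain ⟨z, hz, rfl⟩ := hz
    simp only [LL_apply, fr_LF, h1 z hz, h2 z hz, zero_smul, sub_zero, add_zero, Polynomial.coeff_C]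
    split_ifs with hi
    · exact LL_mem_RE hz
    · exact Submodule.zero_mem _
  | zero => simp [Prod.mk_zero_zero]
  | add a b _ _ ha hb =>
    have := Submodule.add_mem _ (ha i) (hb i)
    simpa using this
  | smul r a _ ha =>
    have : ((fr θ t (r • a).1).coeff i, (fr θ t (r • a).2).coeff i) =
        ∑ x ∈ Finset.HasAntidiagonal.antidiagonal i, (fr θ t r).coeff x.1 •
          (((fr θ t a.1).coeff x.2, (fr θ t a.2).coeff x.2) :
            MvPolynomial (Fin N) K × MvPolynomial (Fin N) K) := by
      ext1
      · simp [Prod.fst_sum, Polynomial.coeff_mul]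
      · simp [Prod.snd_sum, Polynomial.coeff_mul]
    rw [this]
    exact Submodule.sum_mem _ fun x _ => Submodule.smul_mem _ _ (ha x.2)

lemma fresh (E : Submodule K ((Fin N → K) × (Fin N → K)))
    (hE : ∀ w, (w, 0) ∈ E → ((0 : Fin N → K), w) ∈ E)
    (θ : (Fin N → K) →ₗ[K] K) (h1 : ∀ z ∈ E, θ z.1 = 0) (h2 : ∀ z ∈ E, θ z.2 = 0)
    (τ : (Fin N → K) × (Fin N → K)) (hτ1 : θ τ.1 = 1) (hτ2 : θ τ.2 = 0)
    (f : MvPolynomial (Fin N) K) :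
    f • LL K N τ ∈ RE (E : Set ((Fin N → K) × (Fin N → K))) ↔
      (f, (0 : MvPolynomial (Fin N) K)) ∈ RE (E : Set ((Fin N → K) × (Fin N → K))) := by
  constructor
  · intro hf
    have hc := fr_coeff_mem θ τ.1 E h1 h2 _ hf
    simp only [LL_apply, Prod.smul_fst, Prod.smul_snd, smul_eq_mul, map_mul, fr_LF, hτ1, hτ2,
      one_smul, sub_self, map_zero, zero_add, zero_smul, sub_zero, add_zero,
      Polynomial.coeff_mul_C] at hc
    have key : ∀ k i, (fr θ τ.1 f).natDegree + 1 ≤ k + i → ((fr θ τ.1 f).coeff i,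
        (0 : MvPolynomial (Fin N) K)) ∈ RE (E : Set ((Fin N → K) × (Fin N → K))) := by
      intro k
      induction k with
      | zero =>
        intro i hi
        rw [Polynomial.coeff_eq_zero_of_natDegree_lt (by lia)]
        exact Submodule.zero_mem _
      | succ k ih =>
        intro i hi
        have e1 := good_swap E hE _ (ih (i+1) (by lia))
        have e2 := Submodule.smul_mem _ (LF K N τ.2) e1
        have e3 := Submodule.sub_mem _ (hc (i+1)) e2
        rw [Polynomial.coeff_mul_X] at e3
        convert! e3 using 1
        ext1
        · simp
        · simp [mul_comm]
    have hfe := fr_eval θ τ.1 f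
    rw [Polynomial.eval_eq_sum_range] at hfe
    have := Submodule.sum_mem _ fun i (_ : i ∈ Finset.range ((fr θ τ.1 f).natDegree + 1)) =>
      Submodule.smul_mem _ (LF K N τ.1 ^ i) (key ((fr θ τ.1 f).natDegree + 1) i (by lia))
    convert! this using 1
    ext1
    · simp only [Prod.fst_sum, Prod.smul_fst, smul_eq_mul]
      conv_lhs => rw [← hfe]
      exact Finset.sum_congr rfl fun i _ => mul_comm _ _
    · simp [Prod.snd_sum]
  · intro hf
    have h := Submodule.add_mem _ (Submodule.smul_mem _ (LF K N τ.1) hf)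
      (Submodule.smul_mem _ (LF K N τ.2) (good_swap E hE f hf))
    convert! h using 1
    ext1
    · simp [mul_comm]
    · simp [mul_comm]

lemma RE_sup (A B : Submodule K ((Fin N → K) × (Fin N → K))) :
    RE ((A ⊔ B : Submodule K ((Fin N → K) × (Fin N → K))) : Set ((Fin N → K) × (Fin N → K))) =
      RE (A : Set ((Fin N → K) × (Fin N → K))) ⊔ RE (B : Set ((Fin N → K) × (Fin N → K))) := by
  conv_lhs => rw [← Submodule.span_eq A, ← Submodule.span_eq B, ← Submodule.span_union, RE_span]
  simp only [RE, Set.image_union, Submodule.span_union]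

lemma step (E : Submodule K ((Fin N → K) × (Fin N → K)))
    (hE : ∀ w, (w, 0) ∈ E → ((0 : Fin N → K), w) ∈ E)
    (θ : (Fin N → K) →ₗ[K] K) (h1 : ∀ z ∈ E, θ z.1 = 0) (h2 : ∀ z ∈ E, θ z.2 = 0)
    (τ : (Fin N → K) × (Fin N → K)) (hτ1 : θ τ.1 = 1) (hτ2 : θ τ.2 = 0) {n : ℕ}
    (hn : HP (MvPolynomial (Fin N) K) n
      ((MvPolynomial (Fin N) K × MvPolynomial (Fin N) K) ⧸ RE (E : Set ((Fin N → K) × (Fin N → K)))))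
    (hm : Module.finrank K E ≤ n + 1) :
    HP (MvPolynomial (Fin N) K) (n+1)
      ((MvPolynomial (Fin N) K × MvPolynomial (Fin N) K) ⧸
        RE ((E ⊔ Submodule.span K {τ} : Submodule K ((Fin N → K) × (Fin N → K))) : Set ((Fin N → K) × (Fin N → K)))) := by
  rw [RE_sup, RE_span]
  have : RE {τ} = Submodule.span (MvPolynomial (Fin N) K) {LL K N τ} := by
    rw [RE, Set.image_singleton]
  rw [this]
  refine HP.seq2 _ _ (fun f => fresh E hE θ h1 h2 τ hτ1 hτ2 f) (HP.seq1 _ hn ?_)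
    (hn.mono (Nat.le_succ n))
  let G := E.map (LinearMap.snd K (Fin N → K) (Fin N → K))
  have hG := HP_lin1 G (G : Set (Fin N → K)) (fun z hz => hz)
  have heq : (RE (E : Set ((Fin N → K) × (Fin N → K)))).map (LinearMap.snd (MvPolynomial (Fin N) K) _ _) =
      Ideal.span (LF K N '' (G : Set (Fin N → K))) := by
    rw [RE, Submodule.map_span]
    change Submodule.span _ _ = Submodule.span _ _
    congr 1
    rw [Submodule.map_coe, Set.image_image, Set.image_image]
    rfl
  rw [heq]
  refine hG.mono (le_trans ?_ hm)
  exact Submodule.finrank_map_le _ _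
end fresh

section linalg
variable {K : Type u} [Field K] {V : Type u} [AddCommGroup V] [Module K V] [FiniteDimensional K V]

/-- the span of all entries -/
def entries (E : Submodule K (V × V)) : Submodule K V :=
  E.map (LinearMap.fst K V V) ⊔ E.map (LinearMap.snd K V V)

lemma exists_rel_compl (F E : Submodule K (V × V)) (h : F ≤ E) :
    ∃ G, F ⊔ G = E ∧ Module.finrank K F + Module.finrank K G = Module.finrank K E := by
  obtain ⟨F', hF'⟩ := Submodule.exists_isCompl F
  have h1 : F ⊔ F' ⊓ E = E := by
    rw [← sup_inf_assoc_of_le F' h, hF'.sup_eq_top, top_inf_eq]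
  have h2 : F ⊓ (F' ⊓ E) = ⊥ := by
    rw [← inf_assoc, hF'.inf_eq_bot, bot_inf_eq]
  refine ⟨F' ⊓ E, h1, ?_⟩
  have := Submodule.finrank_sup_add_finrank_inf_eq F (F' ⊓ E)
  rw [h1, h2, finrank_bot] at this
  lia

lemma finrank_entries_le (E : Submodule K (V × V)) :
    Module.finrank K (entries E) ≤ 2 * Module.finrank K E := by
  have h1 := Submodule.finrank_add_le_finrank_add_finrank (E.map (LinearMap.fst K V V)) (E.map (LinearMap.snd K V V))
  have h2 := Submodule.finrank_map_le (LinearMap.fst K V V) E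
  have h3 := Submodule.finrank_map_le (LinearMap.snd K V V) E
  unfold entries
  lia

lemma entries_count (F E : Submodule K (V × V)) (h : F ≤ E) (W : Submodule K V)
    (hW : ∀ z ∈ F, z.1 ∈ W ∧ z.2 ∈ W) :
    Module.finrank K (entries E) + 2 * Module.finrank K F ≤
      2 * Module.finrank K E + Module.finrank K W := by
  obtain ⟨G, hG, hG2⟩ := exists_rel_compl F E h
  have h1 : entries E ≤ W ⊔ entries G := by
    unfold entries
    rw [← hG, Submodule.map_sup, Submodule.map_sup]
    have e1 : F.map (LinearMap.fst K V V) ≤ W := by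
      rintro _ ⟨z, hz, rfl⟩; exact (hW z hz).1
    have e2 : F.map (LinearMap.snd K V V) ≤ W := by
      rintro _ ⟨z, hz, rfl⟩; exact (hW z hz).2
    refine sup_le (sup_le (e1.trans le_sup_left) ?_) (sup_le (e2.trans le_sup_left) ?_)
    · exact le_sup_left.trans le_sup_right
    · exact le_sup_right.trans le_sup_right
  have h2 := Submodule.finrank_mono h1
  have h3 := Submodule.finrank_add_le_finrank_add_finrank W (entries G)
  have h4 := finrank_entries_le G
  lia

lemma indep_ext (k : ℕ) (w : ℕ → V) (l : ℕ → K) (hl : Function.Injective l)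
    (h : LinearIndependent K fun i : Fin k => w i) (h' : w k ≠ 0) :
    LinearIndependent K fun i : Fin (k+1) => ((w i, l i • w i) : V × V) := by
  rw [linearIndependent_fin_succ']
  constructor
  · refine LinearIndependent.of_comp (LinearMap.fst K V V) ?_
    exact h
  · intro hm
    obtain ⟨c, hc⟩ := (Submodule.mem_span_range_iff_exists_fun K).1 hm
    have e1 := congrArg Prod.fst hc
    have e2 := congrArg Prod.snd hc
    simp [Fin.init, Prod.fst_sum, Prod.snd_sum] at e1 e2
    have e3 : ∑ i : Fin k, (c i * (l i - l k)) • w i = 0 := by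
      simp only [mul_sub, sub_smul, Finset.sum_sub_distrib]
      simp only [mul_smul] at *
      rw [e2, ← e1, Finset.smul_sum, sub_eq_zero]
      exact Finset.sum_congr rfl fun i _ => smul_comm _ _ _
    have e4 := Fintype.linearIndependent_iff.1 h _ e3
    apply h'
    rw [← e1]
    refine Finset.sum_eq_zero fun i _ => ?_
    have := e4 i
    rcases mul_eq_zero.1 this with h | h
    · simp [h]
    · have := hl (sub_eq_zero.1 h)
      have := i.2
      lia

lemma row_bad (E : Submodule K (V × V)) (k : ℕ) (w : ℕ → V) (l : ℕ → K)
    (hl : Function.Injective l) (hE : ∀ i, (w i, l i • w i) ∈ E)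
    (h : LinearIndependent K fun i : Fin k => w i) (h' : w k ≠ 0) (W : Submodule K V)
    (hW : ∀ i : Fin (k+1), w i ∈ W) :
    Module.finrank K (entries E) + 2 * (k + 1) ≤
      2 * Module.finrank K E + Module.finrank K W := by
  have hi := indep_ext k w l hl h h'
  have := entries_count (Submodule.span K (Set.range fun i : Fin (k+1) => ((w i, l i • w i) : V × V)))
    E (Submodule.span_le.2 (by rintro _ ⟨i, rfl⟩; exact hE i)) W (by
      intro z hz
      have : Submodule.span K (Set.range fun i : Fin (k+1) => ((w i, l i • w i) : V × V)) ≤ W.prod W :=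
        Submodule.span_le.2 (by rintro _ ⟨i, rfl⟩; exact ⟨hW i, W.smul_mem _ (hW i)⟩)
      exact this hz)
  rw [finrank_span_eq_card hi, Fintype.card_fin] at this
  exact this

lemma good_row [Infinite K] (E : Submodule K (V × V))
    (hU : 2 * Module.finrank K E ≤ Module.finrank K (entries E) + 3) :
    ∃ l : K, ∀ w, (w, l • w) ∈ E → (w, (0 : V)) ∈ E ∧ ((0 : V), w) ∈ E := by
  by_contra! hcon
  have two : ∀ (v : V) (a b : K), a ≠ b → (v, a • v) ∈ E → (v, b • v) ∈ E →
      (v, (0 : V)) ∈ E ∧ ((0 : V), v) ∈ E := by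
    intro v a b hab ha hb
    have h2 : ((0 : V), v) ∈ E := by
      have := E.smul_mem (a - b)⁻¹ (E.sub_mem ha hb)
      simpa [← sub_smul, smul_smul, inv_mul_cancel₀ (sub_ne_zero.2 hab)] using this
    refine ⟨?_, h2⟩
    have := E.sub_mem ha (E.smul_mem a h2)
    simpa using this
  choose w0 hw0 hbad using hcon
  let l : ℕ → K := Infinite.natEmbedding K
  have hl : Function.Injective l := (Infinite.natEmbedding K).injective
  let w : ℕ → V := fun i => w0 (l i)
  have hw : ∀ i, (w i, l i • w i) ∈ E := fun i => hw0 (l i)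
  have hwb : ∀ i, ¬ ((w i, (0 : V)) ∈ E ∧ ((0 : V), w i) ∈ E) := fun i h => hbad (l i) h.1 h.2
  have hne : ∀ i, w i ≠ 0 := fun i h => hwb i (by rw [h]; exact ⟨E.zero_mem, E.zero_mem⟩)
  have h1 : LinearIndependent K fun i : Fin 1 => w i :=
    LinearIndependent.of_subsingleton 0 (hne 0)
  have h2 : LinearIndependent K fun i : Fin 2 => w i := by
    rw [linearIndependent_fin_succ']
    refine ⟨h1, fun hm => ?_⟩
    obtain ⟨c, hc⟩ := (Submodule.mem_span_range_iff_exists_fun K).1 hm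
    simp [Fin.init] at hc
    have hc0 : c 0 ≠ 0 := by
      intro h0
      rw [h0, zero_smul] at hc
      exact hne 1 hc.symm
    have h3 := E.smul_mem (c 0)⁻¹ (hw 1)
    rw [← hc, smul_comm (l 1)] at h3
    simp only [Prod.smul_mk, smul_smul (c 0)⁻¹, inv_mul_cancel₀ hc0, one_smul] at h3
    exact hwb 0 (two _ _ _ (hl.ne (by decide)) (hw 0) h3)
  by_cases hm : w 2 ∈ Submodule.span K (Set.range fun i : Fin 2 => w i)
  · have := row_bad E 2 w l hl hw h2 (hne 2)
      (Submodule.span K (Set.range fun i : Fin 2 => w i)) (fun i => by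
      fin_cases i
      · exact Submodule.subset_span ⟨0, rfl⟩
      · exact Submodule.subset_span ⟨1, rfl⟩
      · exact hm)
    have h4 : Module.finrank K (Submodule.span K (Set.range fun i : Fin 2 => w i)) ≤ 2 := by
      simpa [Set.finrank] using finrank_range_le_card (R := K) (fun i : Fin 2 => w i)
    lia
  · have h3 : LinearIndependent K fun i : Fin 3 => w i := by
      rw [linearIndependent_fin_succ']
      exact ⟨h2, hm⟩
    have := row_bad E 3 w l hl hw h3 (hne 3) (Submodule.span K (Set.range fun i : Fin 4 => w i))
      (fun i => Submodule.subset_span ⟨i, rfl⟩)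
    have h4 : Module.finrank K (Submodule.span K (Set.range fun i : Fin 4 => w i)) ≤ 4 := by
      simpa [Set.finrank] using finrank_range_le_card (R := K) (fun i : Fin 4 => w i)
    lia
end linalg

section main

/-- row operation -/
def shear {R : Type*} [CommRing R] (M : Type*) [AddCommGroup M] [Module R M] (c : R) :
    (M × M) ≃ₗ[R] (M × M) where
  toFun z := (z.1, z.2 - c • z.1)
  invFun z := (z.1, z.2 + c • z.1)
  map_add' a b := by ext1 <;> simp; abel
  map_smul' r a := by ext1 <;> simp [smul_sub, smul_comm r c]
  left_inv z := by simp
  right_inv z := by simp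

@[simp] lemma shear_apply {R : Type*} [CommRing R] (M : Type*) [AddCommGroup M] [Module R M] (c : R)
    (z : M × M) : shear M c z = (z.1, z.2 - c • z.1) := rfl

variable {K : Type u} [Field K] {N : ℕ}

lemma RE_shear (l : K) (E : Submodule K ((Fin N → K) × (Fin N → K))) :
    (RE (E : Set ((Fin N → K) × (Fin N → K)))).map
      (shear (MvPolynomial (Fin N) K) (algebraMap K (MvPolynomial (Fin N) K) l)).toLinearMap =
    RE (E.map (shear (Fin N → K) l).toLinearMap : Set ((Fin N → K) × (Fin N → K))) := by
  rw [RE, RE, Submodule.map_span]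
  congr 1
  rw [Submodule.map_coe, Set.image_image, Set.image_image]
  refine Set.image_congr fun z _ => ?_
  ext1
  · simp
  · simp [algebraMap_eq, smul_eq_C_mul]

lemma HP_shear (l : K) (E : Submodule K ((Fin N → K) × (Fin N → K))) {n : ℕ}
    (h : HP (MvPolynomial (Fin N) K) n ((MvPolynomial (Fin N) K × MvPolynomial (Fin N) K) ⧸
      RE (E.map (shear (Fin N → K) l).toLinearMap : Set ((Fin N → K) × (Fin N → K))))) :
    HP (MvPolynomial (Fin N) K) n ((MvPolynomial (Fin N) K × MvPolynomial (Fin N) K) ⧸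
      RE (E : Set ((Fin N → K) × (Fin N → K)))) :=
  HP.equiv (Submodule.Quotient.equiv _ _ (shear (MvPolynomial (Fin N) K)
    (algebraMap K (MvPolynomial (Fin N) K) l)) (RE_shear l E)).symm h

lemma entries_shear_le {V : Type u} [AddCommGroup V] [Module K V] (l : K)
    (E : Submodule K (V × V)) : entries E ≤ entries (E.map (shear V l).toLinearMap) := by
  have key : ∀ z ∈ E, z.1 ∈ entries (E.map (shear V l).toLinearMap) ∧
      z.2 - l • z.1 ∈ entries (E.map (shear V l).toLinearMap) := by
    intro z hz
    have h : shear V l z ∈ E.map (shear V l).toLinearMap := ⟨z, hz, rfl⟩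
    exact ⟨Submodule.mem_sup_left ⟨_, h, rfl⟩, Submodule.mem_sup_right ⟨_, h, rfl⟩⟩
  refine sup_le ?_ ?_
  · rintro _ ⟨z, hz, rfl⟩
    exact (key z hz).1
  · rintro _ ⟨z, hz, rfl⟩
    have := Submodule.add_mem _ (key z hz).2 (Submodule.smul_mem _ l (key z hz).1)
    simpa using this

lemma entries_mem {V : Type u} [AddCommGroup V] [Module K V] 
    {E : Submodule K (V × V)} {z} (hz : z ∈ E) : z.1 ∈ entries E ∧ z.2 ∈ entries E :=
  ⟨Submodule.mem_sup_left ⟨_, hz, rfl⟩, Submodule.mem_sup_right ⟨_, hz, rfl⟩⟩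

lemma mainY_good (e : ℕ)
    (ih : ∀ E : Submodule K ((Fin N → K) × (Fin N → K)), e ≤ Module.finrank K E →
      HP (MvPolynomial (Fin N) K) (2 * Module.finrank K E - e)
        ((MvPolynomial (Fin N) K × MvPolynomial (Fin N) K) ⧸ RE (E : Set ((Fin N → K) × (Fin N → K)))))
    (E : Submodule K ((Fin N → K) × (Fin N → K))) (hm : e + 1 ≤ Module.finrank K E)
    (hU : 2 * Module.finrank K E - (e + 1) < Module.finrank K (entries E))
    (hE : ∀ w, (w, 0) ∈ E → ((0 : Fin N → K), w) ∈ E) :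
    HP (MvPolynomial (Fin N) K) (2 * Module.finrank K E - (e + 1))
        ((MvPolynomial (Fin N) K × MvPolynomial (Fin N) K) ⧸ RE (E : Set ((Fin N → K) × (Fin N → K)))) := by
  let G := E.map (LinearMap.snd K (Fin N → K) (Fin N → K))
  obtain ⟨τ, hτ, hτG⟩ : ∃ τ ∈ E, τ.1 ∉ G := by
    by_contra! hcon
    have h1 : entries E ≤ G := by
      refine sup_le ?_ le_rfl
      rintro _ ⟨z, hz, rfl⟩
      exact hcon z hz
    have h2 := Submodule.finrank_mono h1
    have h3 : Module.finrank K G ≤ Module.finrank K E := Submodule.finrank_map_le _ _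
    lia
  obtain ⟨θ, hθ, hθG⟩ : ∃ θ : (Fin N → K) →ₗ[K] K, θ τ.1 = 1 ∧ ∀ g ∈ G, θ g = 0 := by
    obtain ⟨f, hf, hfG⟩ := Submodule.exists_le_ker_of_notMem hτG
    refine ⟨(f τ.1)⁻¹ • f, by simp [hf], fun g hg => ?_⟩
    have := hfG hg
    simp [LinearMap.mem_ker.1 this]
  have h2 : ∀ z ∈ E, θ z.2 = 0 := fun z hz => hθG _ ⟨z, hz, rfl⟩
  let E' := E ⊓ LinearMap.ker (θ ∘ₗ LinearMap.fst K (Fin N → K) (Fin N → K))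
  have hE'E : E' ≤ E := inf_le_left
  have h1 : ∀ z ∈ E', θ z.1 = 0 := fun z hz => hz.2
  have hsup : E' ⊔ Submodule.span K {τ} = E := by
    apply le_antisymm
    · exact sup_le hE'E (by simpa using hτ)
    · intro z hz
      refine Submodule.mem_sup.2 ⟨z - θ z.1 • τ, ⟨E.sub_mem hz (E.smul_mem _ hτ), ?_⟩, θ z.1 • τ,
        Submodule.mem_span_singleton.2 ⟨_, rfl⟩, by abel⟩
      simp [hθ]
  have hinf : E' ⊓ Submodule.span K {τ} = ⊥ := by
    rw [eq_bot_iff]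
    rintro z ⟨hz, hz'⟩
    obtain ⟨c, rfl⟩ := Submodule.mem_span_singleton.1 hz'
    have := h1 _ hz
    simp [hθ] at this
    simp [this]
  have hτ0 : τ ≠ 0 := by rintro rfl; simp at hθ
  have hrank : Module.finrank K E' + 1 = Module.finrank K E := by
    have := Submodule.finrank_sup_add_finrank_inf_eq E' (Submodule.span K {τ})
    rw [hsup, hinf, finrank_bot, finrank_span_singleton hτ0] at this
    lia
  have hst := step E' (fun w hw => ⟨hE w hw.1, by simp⟩) θ h1 (fun z hz => h2 z (hE'E hz)) τ hθ
    (h2 τ hτ) (ih E' (by lia)) (by lia)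
  rw [hsup] at hst
  exact hst.mono (by lia)

lemma mainY [Infinite K] (e : ℕ) (he : e ≤ 4) : ∀ E : Submodule K ((Fin N → K) × (Fin N → K)),
    e ≤ Module.finrank K E →
      HP (MvPolynomial (Fin N) K) (2 * Module.finrank K E - e)
        ((MvPolynomial (Fin N) K × MvPolynomial (Fin N) K) ⧸ RE (E : Set ((Fin N → K) × (Fin N → K)))) := by
  induction e with
  | zero =>
    intro E _
    exact (HP_lin2 (entries E) E (fun z hz => entries_mem hz)).mono (finrank_entries_le E)
  | succ e ih =>
    intro E hm
    by_cases hU : Module.finrank K (entries E) ≤ 2 * Module.finrank K E - (e + 1)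
    · exact (HP_lin2 (entries E) E (fun z hz => entries_mem hz)).mono hU
    · obtain ⟨l, hl⟩ := good_row E (by lia)
      apply HP_shear l
      have hr : Module.finrank K (E.map (shear (Fin N → K) l).toLinearMap) = Module.finrank K E :=
        LinearEquiv.finrank_map_eq _ _
      have hU' := Submodule.finrank_mono (entries_shear_le l E)
      rw [← hr]
      refine mainY_good e (ih (by lia)) _ (by lia) (by lia) ?_
      rintro w ⟨⟨a, b⟩, hz, hzw⟩
      simp [Prod.ext_iff] at hzw
      obtain ⟨rfl, hb⟩ := hzw
      rw [sub_eq_zero] at hb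
      subst hb
      exact ⟨(0, a), (hl a hz).2, by simp⟩

end main

lemma PdLE_of_HP (R : Type u) [CommRing R] (n : ℕ) (M : Type u) [AddCommGroup M] [Module R M]
    (h : HP R n M) : PdLE R n M := by
  induction n generalizing M with
  | zero => exact HP.zero_iff.1 h
  | succ n ih =>
    obtain ⟨f, hf⟩ := exists_free_cover R M
    exact ⟨M →₀ R, inferInstance, inferInstance, inferInstance, f, hf, ih _ (HP.ker f hf h)⟩

lemma projDim_le_of_HP (R : Type u) [CommRing R] (n : ℕ) (M : Type u) [AddCommGroup M] [Module R M]
    (h : HP R n M) : projDim R M ≤ (n : ℕ∞) :=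
  sInf_le ⟨n, PdLE_of_HP R n M h, rfl⟩

lemma idealHeight_le {R : Type u} [CommRing R] (I P : Ideal R) [hP : P.IsPrime] (h : I ≤ P) :
    idealHeight I ≤ P.height := by
  have h1 : idealHeight I ≤ Order.height (⟨P, hP⟩ : PrimeSpectrum R) :=
    iInf₂_le (⟨P, hP⟩ : PrimeSpectrum R) h
  refine h1.trans (le_of_eq ?_)
  exact (PrimeSpectrum.height_eq_orderHeight (⟨P, hP⟩ : PrimeSpectrum R)).symm

section final
variable {K : Type u} [Field K] {N : ℕ}

lemma hc_mul (p x : MvPolynomial (Fin N) K) (hx : x.IsHomogeneous 1) (k : ℕ) :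
    homogeneousComponent (k+1) (p * x) = homogeneousComponent k p * x := by
  conv_lhs => rw [← sum_homogeneousComponent p, Finset.sum_mul, map_sum]
  have : ∀ i, homogeneousComponent (k+1) (homogeneousComponent i p * x) =
      if i = k then homogeneousComponent i p * x else 0 := by
    intro i
    have h := (homogeneousComponent_isHomogeneous i p).mul hx
    rw [homogeneousComponent_of_mem h]
    simp [eq_comm]
  simp only [this, Finset.sum_ite_eq', Finset.mem_range]
  split_ifs with h
  · rfl
  · rw [homogeneousComponent_eq_zero _ _ (by lia), zero_mul]

lemma quad_mem (a b : Fin N → K) (g : MvPolynomial (Fin N) K) (hg : g.IsHomogeneous 2)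
    (h : g ∈ Ideal.span {LF K N a, LF K N b}) :
    ∃ u v, g = LF K N v * LF K N a - LF K N u * LF K N b := by
  obtain ⟨p, q, hpq⟩ := Ideal.mem_span_pair.1 h
  have h1 := congrArg (homogeneousComponent 2) hpq
  rw [map_add, hc_mul _ _ (LF_homog a) 1, hc_mul _ _ (LF_homog b) 1,
    homogeneousComponent_eq_self hg] at h1
  obtain ⟨v, hv⟩ := exists_LF (homogeneousComponent_isHomogeneous 1 p)
  obtain ⟨u, hu⟩ := exists_LF (homogeneousComponent_isHomogeneous 1 q)
  refine ⟨-u, v, ?_⟩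
  rw [← h1, ← hv, ← hu, map_neg]
  ring

lemma indep_of_min {n : ℕ} (I : Ideal (MvPolynomial (Fin N) K)) (g : Fin n → MvPolynomial (Fin N) K)
    (hI : I = Ideal.span (Set.range g))
    (hmin : ∀ (k : ℕ) (h : Fin k → MvPolynomial (Fin N) K),
      I = Ideal.span (Set.range h) → n ≤ k) : LinearIndependent K g := by
  rw [linearIndependent_iff_notMem_span]
  intro j hj
  obtain _ | n := n
  · exact j.elim0
  have := hmin n (fun i => g (j.succAbove i)) (by
    rw [hI]
    apply le_antisymm
    · refine Ideal.span_le.2 ?_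
      have hsub : g '' (Set.univ \ {j}) ⊆ Set.range fun i => g (j.succAbove i) := by
        rintro _ ⟨i, hi, rfl⟩
        obtain ⟨i', rfl⟩ := Fin.exists_succAbove_eq (x := i) (y := j) (by simpa using hi)
        exact ⟨i', rfl⟩
      rintro _ ⟨i, rfl⟩
      by_cases hij : i = j
      · subst hij
        have hle : Submodule.span K (g '' (Set.univ \ {i})) ≤
            (Ideal.span (Set.range fun k => g (i.succAbove k))).restrictScalars K :=
          Submodule.span_le.2 fun z hz => Ideal.subset_span (hsub hz)
        exact hle hj
      · exact Ideal.subset_span (hsub ⟨i, by simpa using hij, rfl⟩)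
    · refine Ideal.span_mono ?_
      rintro _ ⟨i, rfl⟩
      exact ⟨_, rfl⟩)
  lia

lemma HP_two (g0 g1 : MvPolynomial (Fin N) K) (h1 : g1 ≠ 0) (hrel : IsRelPrime g0 g1) :
    HP (MvPolynomial (Fin N) K) 2 (MvPolynomial (Fin N) K ⧸ Ideal.span {g0, g1}) := by
  let R := MvPolynomial (Fin N) K
  let t : R × R := (g1, -g0)
  let ψ : R × R →ₗ[R] R := (LinearMap.toSpanSingleton R R g0).coprod (LinearMap.toSpanSingleton R R g1)
  have hψ : ∀ z, ψ z = z.1 * g0 + z.2 * g1 := fun z => by simp [ψ]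
  have hker : LinearMap.ker ψ = Submodule.span R {t} := by
    apply le_antisymm
    · intro z hz
      rw [LinearMap.mem_ker, hψ] at hz
      have hd : g1 ∣ z.1 := by
        refine hrel.symm.dvd_of_dvd_mul_right (y := z.1) ⟨-z.2, ?_⟩
        linear_combination hz
      obtain ⟨s, hs⟩ := hd
      refine Submodule.mem_span_singleton.2 ⟨s, ?_⟩
      ext1
      · simp [t, hs, mul_comm]
      · rw [hs] at hz
        have : g1 * (z.2 + s * g0) = 0 := by linear_combination hz
        have := (mul_eq_zero.1 this).resolve_left h1
        simp [t]
        linear_combination -this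
    · rw [Submodule.span_singleton_le_iff_mem, LinearMap.mem_ker, hψ]
      simp [t]; ring
  have hrange : LinearMap.range ψ = Ideal.span {g0, g1} := by
    ext f
    rw [Ideal.mem_span_pair]
    constructor
    · rintro ⟨z, rfl⟩
      exact ⟨z.1, z.2, (hψ z).symm⟩
    · rintro ⟨a, b, rfl⟩
      exact ⟨(a, b), hψ _⟩
  have hC : HP R 1 ((R × R) ⧸ LinearMap.ker ψ) := by
    rw [hker]
    refine HP.right (A := R) (B := R × R) (LinearMap.toSpanSingleton R (R × R) t) (Submodule.mkQ _) ?_ (Submodule.mkQ_surjective _)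
      ?_ (HP.of_proj 0) (HP.of_proj 1)
    · rw [injective_iff_map_eq_zero]
      intro f hf
      have := congrArg Prod.fst hf
      simp [t] at this
      exact this.resolve_right h1
    · rw [LinearMap.exact_iff, Submodule.ker_mkQ, LinearMap.range_toSpanSingleton]
  refine HP.right ((LinearMap.ker ψ).liftQ ψ le_rfl) (Submodule.mkQ _) ?_ (Submodule.mkQ_surjective _)
      ?_ hC (HP.of_proj 2)
  · rw [← LinearMap.ker_eq_bot, Submodule.ker_liftQ_eq_bot _ _ _ le_rfl]
  · rw [LinearMap.exact_iff, Submodule.ker_mkQ, Submodule.range_liftQ, hrange]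

end final

section final2
variable {K : Type u} [Field K] {N : ℕ}

lemma HP_big [Infinite K] {n : ℕ} (hn : 3 ≤ n) (a b : Fin N → K) (hab : LinearIndependent K ![a, b])
    (u v : Fin n → Fin N → K)
    (hg : LinearIndependent K fun j => LF K N (v j) * LF K N a - LF K N (u j) * LF K N b) :
    HP (MvPolynomial (Fin N) K) (2 * n - 2) (MvPolynomial (Fin N) K ⧸
      Ideal.span (Set.range fun j => LF K N (v j) * LF K N a - LF K N (u j) * LF K N b)) := by
  let R := MvPolynomial (Fin N) K
  let x : R := LF K N a
  let y : R := LF K N b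
  let g : Fin n → R := fun j => LF K N (v j) * x - LF K N (u j) * y
  let I : Ideal R := Ideal.span (Set.range g)
  have ha : a ≠ 0 := hab.ne_zero 0
  have hba : b ∉ Submodule.span K {a} := by
    intro h
    obtain ⟨c, hc⟩ := Submodule.mem_span_singleton.1 h
    have := LinearIndependent.pair_iff.1 hab c (-1) (by simp [hc])
    simp at this
  have hx0 : x ≠ 0 := fun h => ha (LF_injective (by rw [map_zero]; exact h))
  let ψ : R × R →ₗ[R] R := (LinearMap.toSpanSingleton R R (-y)).coprod (LinearMap.toSpanSingleton R R x)
  have hψ : ∀ z, ψ z = z.2 * x - z.1 * y := fun z => by simp [ψ]; ring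
  let col : Fin (n+1) → (Fin N → K) × (Fin N → K) := Fin.cons (a, b) fun j => (u j, v j)
  have hψ0 : ψ (LL K N (a, b)) = 0 := by rw [hψ]; simp [x, y]; ring
  have hψg : ∀ j, ψ (LL K N (u j, v j)) = g j := fun j => by rw [hψ]; rfl
  have hcol : LinearIndependent K col := by
    rw [linearIndependent_fin_cons]
    have h1 : LinearIndependent K fun j => (u j, v j) := by
      refine LinearIndependent.of_comp ((ψ.restrictScalars K) ∘ₗ LL K N) ?_
      convert! hg using 1
      funext j
      exact hψg j
    refine ⟨h1, fun hm => ?_⟩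
    obtain ⟨c, hc⟩ := (Submodule.mem_span_range_iff_exists_fun K).1 hm
    have h2 : ∑ j, c j • g j = 0 := by
      have := congrArg ((ψ.restrictScalars K) ∘ₗ LL K N) hc
      rw [map_sum] at this
      simp only [map_smul, LinearMap.comp_apply, LinearMap.restrictScalars_apply, hψ0, hψg] at this
      exact this
    have h3 := Fintype.linearIndependent_iff.1 hg c h2
    have h4 := congrArg Prod.fst hc
    simp [h3] at h4
    exact ha h4.symm
  let E := Submodule.span K (Set.range col)
  have hE : Module.finrank K E = n + 1 := by
    rw [finrank_span_eq_card hcol, Fintype.card_fin]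
  have hY := mainY 4 le_rfl E (by lia)
  rw [hE] at hY
  have hRE : RE (E : Set ((Fin N → K) × (Fin N → K))) = RE (Set.range col) := RE_span _
  rw [hRE] at hY
  have hIle : I ≤ Ideal.span {x, y} := by
    refine Ideal.span_le.2 ?_
    rintro _ ⟨j, rfl⟩
    exact Ideal.mem_span_pair.2 ⟨LF K N (v j), -LF K N (u j), by simp [g]; ring⟩
  have hmem0 : LL K N (a, b) ∈ RE (Set.range col) := LL_mem_RE ⟨0, rfl⟩
  have hmemj : ∀ j, LL K N (u j, v j) ∈ RE (Set.range col) := fun j => LL_mem_RE ⟨j.succ, rfl⟩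
  have hprime : (Ideal.span {x} : Ideal R).IsPrime := by
    have := lin_prime (Submodule.span K {a})
    rwa [span_LF_span, Set.image_singleton] at this
  have hynot : y ∉ (Ideal.span {x} : Ideal R) := by
    intro h
    apply hba
    rw [← lin_mem, span_LF_span, Set.image_singleton]
    exact h
  have hcomap : RE (Set.range col) = Submodule.comap ψ I := by
    apply le_antisymm
    · refine Submodule.span_le.2 ?_
      rintro _ ⟨_, ⟨i, rfl⟩, rfl⟩
      refine Fin.cases ?_ (fun j => ?_) i
      · change ψ (LL K N (a, b)) ∈ I
        rw [hψ0]; exact I.zero_mem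
      · change ψ (LL K N (u j, v j)) ∈ I
        rw [hψg]; exact Ideal.subset_span ⟨j, rfl⟩
    · intro z hz
      have hz : ψ z ∈ I := hz
      obtain ⟨r, hr⟩ := Ideal.mem_span_range_iff_exists_fun.1 hz
      let w : R × R := ∑ j, r j • LL K N (u j, v j)
      have hw : w ∈ RE (Set.range col) :=
        Submodule.sum_mem _ fun j _ => Submodule.smul_mem _ _ (hmemj j)
      have h0 : ψ (z - w) = 0 := by
        rw [map_sub, ← hr, map_sum]
        simp only [map_smul, hψg, smul_eq_mul, sub_self]
      obtain ⟨z', hz'⟩ : ∃ z', z' = z - w := ⟨_, rfl⟩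
      rw [← hz', hψ, sub_eq_zero] at h0
      have h1 : z'.1 * y ∈ (Ideal.span {x} : Ideal R) := by
        rw [← h0]; exact Ideal.mul_mem_left _ _ (Ideal.subset_span rfl)
      obtain ⟨s, hs⟩ := Ideal.mem_span_singleton'.1 ((hprime.mem_or_mem h1).resolve_right hynot)
      have h2 : z'.2 = s * y := by
        apply mul_right_cancel₀ hx0
        rw [h0, ← hs]; ring
      have h3 : z' = s • LL K N (a, b) := Prod.ext hs.symm h2
      have h4 : z = z' + w := by rw [hz']; simp
      rw [h4, h3]
      exact Submodule.add_mem _ (Submodule.smul_mem _ _ hmem0) hw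
  have hxy : HP R 2 (R ⧸ Ideal.span {x, y}) := by
    have h1 := HP_lin1 (Submodule.span K (Set.range ![a, b])) {a, b} (fun z hz => by
      apply Submodule.subset_span
      rcases hz with rfl | rfl
      · exact ⟨0, rfl⟩
      · exact ⟨1, rfl⟩)
    rw [Set.image_pair] at h1
    refine h1.mono ?_
    rw [finrank_span_eq_card hab, Fintype.card_fin]
  refine HP.mid ((RE (Set.range col)).mapQ I ψ hcomap.le)
    (Submodule.mapQ I (Ideal.span {x, y}) LinearMap.id hIle) ?_ ?_ ?_ (hY.mono (by lia))
    (hxy.mono (by lia))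
  · rw [← LinearMap.ker_eq_bot, Submodule.ker_mapQ, ← hcomap, Submodule.mkQ_map_self]
  · rw [← LinearMap.range_eq_top, Submodule.range_mapQ, LinearMap.range_id]
    simp
  · intro z
    obtain ⟨f, rfl⟩ := Submodule.Quotient.mk_surjective _ z
    rw [Submodule.mapQ_apply, LinearMap.id_apply, Submodule.Quotient.mk_eq_zero]
    constructor
    · intro h
      obtain ⟨p, q, hpq⟩ := Ideal.mem_span_pair.1 h
      refine ⟨Submodule.Quotient.mk (-q, p), ?_⟩
      rw [Submodule.mapQ_apply, hψ, ← hpq]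
      congr 1
      ring
    · rintro ⟨w, hw⟩
      obtain ⟨w, rfl⟩ := Submodule.Quotient.mk_surjective _ w
      rw [Submodule.mapQ_apply, hψ, Submodule.Quotient.eq] at hw
      have h1 := hIle hw
      have h2 : w.2 * x - w.1 * y ∈ Ideal.span {x, y} :=
        Ideal.mem_span_pair.2 ⟨w.2, -w.1, by ring⟩
      have := Ideal.sub_mem _ h2 h1
      rwa [sub_sub_cancel] at this

end final2

/-- over an algebraically closed field, a height two ideal minimally
generated by `n` quadrics having a linear minimal prime (generated by two linearly
independent linear forms) has `pd(R/I) ≤ 2n - 2`. -/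
theorem stmt6 (K : Type u) [Field K] [IsAlgClosed K] (N n : ℕ)
    (I : Ideal (MvPolynomial (Fin N) K)) (g : Fin n → MvPolynomial (Fin N) K)
    (hg : ∀ i, (g i).IsHomogeneous 2)
    (hI : I = Ideal.span (Set.range g))
    (hmin : ∀ (k : ℕ) (h : Fin k → MvPolynomial (Fin N) K),
      I = Ideal.span (Set.range h) → n ≤ k)
    (hht : idealHeight I = 2)
    (x y : MvPolynomial (Fin N) K) (hx : x.IsHomogeneous 1) (hy : y.IsHomogeneous 1)
    (hxy : LinearIndependent K ![x, y])
    (hminp : Ideal.span {x, y} ∈ I.minimalPrimes) :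
    projDim (MvPolynomial (Fin N) K) (MvPolynomial (Fin N) K ⧸ I) ≤ ((2 * n - 2 : ℕ) : ℕ∞) := by
  haveI : Infinite K := IsAlgClosed.instInfinite
  obtain ⟨a, rfl⟩ := exists_LF hx
  obtain ⟨b, rfl⟩ := exists_LF hy
  have hab : LinearIndependent K ![a, b] := by
    refine LinearIndependent.of_comp (LF K N) ?_
    convert! hxy using 1
    funext i
    fin_cases i <;> rfl
  have hgLI := indep_of_min I g hI hmin
  have hle : I ≤ Ideal.span {LF K N a, LF K N b} := hminp.1.2
  have hmem : ∀ j, g j ∈ Ideal.span {LF K N a, LF K N b} := fun j =>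
    hle (hI ▸ Ideal.subset_span ⟨j, rfl⟩)
  choose u v huv using fun j => quad_mem a b (g j) (hg j) (hmem j)
  have hn2 : 2 ≤ n := by
    haveI := hminp.1.1
    have h1 := idealHeight_le I _ hle
    rw [hht] at h1
    rw [hI] at hminp
    have h2 := Ideal.height_le_card_of_mem_minimalPrimes_span (Set.finite_range g) hminp
    have h3 : (Set.range g).ncard ≤ n := by
      rw [← Set.image_univ]
      refine (Set.ncard_image_le Set.finite_univ).trans ?_
      simp [Set.ncard_univ]
    have h4 := h1.trans h2
    have h5 : 2 ≤ (Set.range g).ncard := by exact_mod_cast h4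
    lia
  apply projDim_le_of_HP
  obtain rfl | hn3 : n = 2 ∨ 3 ≤ n := by lia
  · have hr : Set.range g = {g 0, g 1} := by
      ext z
      simp [Fin.exists_fin_two, eq_comm]
    rw [hI, hr]
    refine HP_two _ _ (hgLI.ne_zero 1) ?_
    intro d hd0 hd1
    by_contra hd
    have hdz : d ≠ 0 := by
      rintro rfl
      exact hgLI.ne_zero 0 (zero_dvd_iff.1 hd0)
    obtain ⟨p, hp, hpd⟩ := WfDvdMonoid.exists_irreducible_factor hd hdz
    haveI : (Ideal.span {p}).IsPrime := (Ideal.span_singleton_prime hp.ne_zero).2 hp.prime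
    have h1 : I ≤ Ideal.span {p} := by
      rw [hI, hr, Ideal.span_le]
      rintro _ (rfl | rfl)
      · exact Ideal.mem_span_singleton.2 (hpd.trans hd0)
      · exact Ideal.mem_span_singleton.2 (hpd.trans hd1)
    have h2 := (idealHeight_le I _ h1).trans (Ideal.height_span_singleton_le_one hp.not_isUnit)
    rw [hht] at h2
    exact absurd h2 (by decide)
  · have hgeq : g = fun j => LF K N (v j) * LF K N a - LF K N (u j) * LF K N b := funext huv
    rw [hI, hgeq]
    exact HP_big hn3 a b hab u v (hgeq ▸ hgLI)
end

section
/- Let R be a polynomial ring over an algebraically closed field K. Let I be an ideal minimally generated by n quadrics, contained in a prime ideal (x, y) with x, y linearly independent linear forms, and suppose I is represented by minors by a 2×(n+1) matrix M of linear forms whose first column is (x, y)^T. If M is 1-generic, then I₂(M) = I : (x, y) = I : (x) = I : (y), where I₂(M) is the ideal of all 2×2 minors of M. -/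
open MvPolynomial Filter

universe u

theorem aux_var {K : Type*} [Field K] {τ : Type*} (s : Set τ) (k : τ) (hk : k ∉ s)
    (z : MvPolynomial τ K) (h : z * X k ∈ Ideal.span (X '' s : Set (MvPolynomial τ K))) :
    z ∈ Ideal.span (X '' s : Set (MvPolynomial τ K)) := by
  classical
  rw [mem_ideal_span_X_image] at h ⊢
  intro m hm
  obtain ⟨i, hi, h2⟩ := h (m + Finsupp.single k 1) (by
    rw [mem_support_iff, coeff_mul_X]
    exact mem_support_iff.mp hm)
  refine ⟨i, hi, ?_⟩
  have : k ≠ i := fun e => hk (e ▸ hi)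
  simpa [Finsupp.single_apply, this] using h2

theorem aux_reg {K : Type*} [Field K] {N : ℕ} {ι : Type*} (a : ι → MvPolynomial (Fin N) K)
    (ha : ∀ i, (a i).IsHomogeneous 1) (hli : LinearIndependent K a)
    (s : Set ι) (k : ι) (hk : k ∉ s)
    (z : MvPolynomial (Fin N) K) (h : z * a k ∈ Ideal.span (a '' s)) :
    z ∈ Ideal.span (a '' s) := by
  classical
  let e := SymmetricAlgebra.equivMvPolynomial (Pi.basisFun K (Fin N))
  have hw : ∀ i, ∃ w : Fin N → K, e (SymmetricAlgebra.ι K _ w) = a i := by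
    intro i
    have h1 : a i ∈ Submodule.span K (Set.range (X : Fin N → MvPolynomial (Fin N) K)) := by
      rw [← homogeneousSubmodule_one_eq_span_X]
      exact ha i
    have h2 : Submodule.span K (Set.range (X : Fin N → MvPolynomial (Fin N) K)) ≤
        LinearMap.range (e.toLinearMap ∘ₗ SymmetricAlgebra.ι K (Fin N → K)) := by
      rw [Submodule.span_le]
      rintro _ ⟨j, rfl⟩
      refine ⟨Pi.basisFun K (Fin N) j, ?_⟩
      exact SymmetricAlgebra.equivMvPolynomial_ι_apply _ _
    exact h2 h1
  choose w hw using hw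
  have hwli : LinearIndependent K w := by
    apply LinearIndependent.of_comp (e.toLinearMap ∘ₗ SymmetricAlgebra.ι K (Fin N → K))
    have h4 : ⇑(e.toLinearMap ∘ₗ SymmetricAlgebra.ι K (Fin N → K)) ∘ w = a := by
      funext i
      exact hw i
    rw [h4]
    exact hli
  let B := Module.Basis.sumExtend hwli
  have hB : ∀ i, B (Sum.inl i) = w i := fun i => by
    simp only [B, Module.Basis.sumExtend, Module.Basis.reindex_apply, Module.Basis.extend_apply_self]
    rfl
  let φ := (SymmetricAlgebra.equivMvPolynomial B).symm.trans e
  have hφ : ∀ i, φ (X (Sum.inl i)) = a i := by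
    intro i
    rw [← hw i, ← hB i]
    simp [φ]
  have hφ' : ∀ i, φ.symm (a i) = X (Sum.inl i) := by
    intro i
    rw [← hφ i]; simp
  have key : Ideal.span (a '' s) =
      (Ideal.span (X '' (Sum.inl '' s) : Set (MvPolynomial _ K))).map φ.toRingEquiv.toRingHom := by
    rw [Ideal.map_span, Set.image_image, Set.image_image]
    congr 1
    apply Set.image_congr
    intro i _
    exact (hφ i).symm
  have mem : ∀ p, p ∈ Ideal.span (a '' s) ↔
      φ.symm p ∈ Ideal.span (X '' (Sum.inl '' s) : Set (MvPolynomial _ K)) := by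
    intro p
    rw [key]
    constructor
    · intro hp
      obtain ⟨q, hq, rfl⟩ := (Ideal.mem_map_iff_of_surjective _ φ.surjective).mp hp
      have : φ.symm (φ.toRingEquiv.toRingHom q) = q := φ.symm_apply_apply q
      exact this.symm ▸ hq
    · intro hp
      have := Ideal.mem_map_of_mem φ.toRingEquiv.toRingHom hp
      have h3 : φ.toRingEquiv.toRingHom (φ.symm p) = p := φ.apply_symm_apply p
      rwa [h3] at this
  rw [mem] at h ⊢
  rw [map_mul, hφ'] at h
  refine aux_var _ _ ?_ _ h
  simpa using hk

theorem aux_koszul {R : Type*} [CommRing R] {ι : Type*} (a b : ι → R)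
    (hreg : ∀ (s : Set ι) (k : ι), k ∉ s → ∀ z, z * a k ∈ Ideal.span (a '' s) →
      z ∈ Ideal.span (a '' s)) (J : Ideal R) (hJ : ∀ i j, a i * b j - a j * b i ∈ J)
    (S : Finset ι) : ∀ (h : ι → R), ∑ i ∈ S, h i * a i = 0 → ∑ i ∈ S, h i * b i ∈ J := by
  classical
  induction S using Finset.induction_on with
  | empty => intro h _; simp
  | insert k S hk ih =>
    intro h h0
    rw [Finset.sum_insert hk] at h0 ⊢
    have h1 : h k ∈ Ideal.span (a '' (S : Set ι)) := by
      apply hreg _ k (by simpa using hk)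
      rw [eq_neg_of_add_eq_zero_left h0]
      refine neg_mem (sum_mem fun i hi => ?_)
      exact Ideal.mul_mem_left _ _ (Ideal.subset_span ⟨i, hi, rfl⟩)
    obtain ⟨d, hd⟩ : ∃ d : ι → R, ∑ i ∈ S, d i * a i = h k := by
      have := (Submodule.mem_span_image_finset_iff_exists_fun R).mp h1
      obtain ⟨c, hc⟩ := this
      refine ⟨fun i => if hi : i ∈ S then c ⟨i, hi⟩ else 0, ?_⟩
      rw [← hc, ← Finset.sum_attach S]
      simp
    have h2 := ih (fun i => h i + d i * a k) (by
      rw [← h0, ← hd, Finset.sum_mul, ← Finset.sum_add_distrib]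
      exact Finset.sum_congr rfl fun i _ => by ring)
    have h3 : ∑ i ∈ S, d i * (a i * b k - a k * b i) ∈ J :=
      sum_mem fun i _ => Ideal.mul_mem_left _ _ (hJ i k)
    convert add_mem h2 h3 using 1
    rw [← hd, Finset.sum_mul, ← Finset.sum_add_distrib, ← Finset.sum_add_distrib]
    exact Finset.sum_congr rfl fun i _ => by ring

theorem aux_main {R : Type*} [CommRing R] {n : ℕ} (x y : R) (u v : Fin n → R)
    (hx : ∀ z, x * z = 0 → z = 0)
    (hxy : ∀ z, z * y ∈ Ideal.span {x} → z ∈ Ideal.span {x})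
    (hreg : ∀ (s : Set (Fin (n+1))) (k : Fin (n+1)), k ∉ s → ∀ z,
      z * (Fin.cons x u : Fin (n+1) → R) k ∈ Ideal.span ((Fin.cons x u : Fin (n+1) → R) '' s) →
      z ∈ Ideal.span ((Fin.cons x u : Fin (n+1) → R) '' s))
    (J : Ideal R) (hJ : ∀ i j, (Fin.cons x u : Fin (n+1) → R) i * (Fin.cons y v : Fin (n+1) → R) j
      - (Fin.cons x u : Fin (n+1) → R) j * (Fin.cons y v : Fin (n+1) → R) i ∈ J)
    (r : R) (hr : r * x ∈ Ideal.span (Set.range fun j : Fin n => x * v j - y * u j)) : r ∈ J := by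
  obtain ⟨h, hh⟩ := (Ideal.mem_span_range_iff_exists_fun).mp hr
  have e1 : x * (r - ∑ j, h j * v j) = - ((∑ j, h j * u j) * y) := by
    rw [mul_sub, mul_comm x r, ← hh, Finset.mul_sum, Finset.sum_mul, ← Finset.sum_sub_distrib,
      ← Finset.sum_neg_distrib]
    exact Finset.sum_congr rfl fun i _ => by ring
  obtain ⟨c, hc⟩ := Ideal.mem_span_singleton.mp (hxy (∑ j, h j * u j) (by
    rw [Ideal.mem_span_singleton]
    exact ⟨-(r - ∑ j, h j * v j), by linear_combination e1⟩))
  have e2 : r - ∑ j, h j * v j + c * y = 0 := hx _ (by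
    linear_combination e1 - y * hc)
  have := aux_koszul _ _ hreg J hJ Finset.univ (Fin.cons (-c) h) (by
    rw [Fin.sum_univ_succ]; simp [hc]; ring)
  rw [Fin.sum_univ_succ] at this
  simp only [Fin.cons_zero, Fin.cons_succ] at this
  convert this using 1
  linear_combination e2

theorem aux_pair {K : Type*} [Field K] {N : ℕ} (x y : MvPolynomial (Fin N) K)
    (hx : x.IsHomogeneous 1) (hy : y.IsHomogeneous 1) (hxy : LinearIndependent K ![x, y])
    (z : MvPolynomial (Fin N) K) (hz : z * y ∈ Ideal.span {x}) : z ∈ Ideal.span {x} := by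
  have := aux_reg ![x, y] (by intro i; fin_cases i <;> simpa) hxy {0} 1 (by simp) z
  simp only [Set.image_singleton] at this
  exact this hz

/-- in the situation of Statement 7, the ideal of all `2 × 2` minors of `M`
satisfies `I₂(M) = I : (x, y) = I : (x) = I : (y)`. -/
theorem stmt8 (K : Type u) [Field K] [IsAlgClosed K] (N n : ℕ)
    (x y : MvPolynomial (Fin N) K) (hx : x.IsHomogeneous 1) (hy : y.IsHomogeneous 1)
    (hxy : LinearIndependent K ![x, y])
    (hprime : (Ideal.span {x, y}).IsPrime)
    (u v : Fin n → MvPolynomial (Fin N) K)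
    (hu : ∀ j, (u j).IsHomogeneous 1) (hv : ∀ j, (v j).IsHomogeneous 1)
    (I : Ideal (MvPolynomial (Fin N) K))
    (hI : I = repByMinors x y u v)
    (hle : I ≤ Ideal.span {x, y})
    (hmin : ∀ (k : ℕ) (h : Fin k → MvPolynomial (Fin N) K),
      I = Ideal.span (Set.range h) → n ≤ k)
    (h1g : OneGeneric K (Matrix.of ![Fin.cons x u, Fin.cons y v] : Matrix (Fin 2) (Fin (n + 1)) (MvPolynomial (Fin N) K))) :
    minors2 (Matrix.of ![Fin.cons x u, Fin.cons y v] : Matrix (Fin 2) (Fin (n + 1)) (MvPolynomial (Fin N) K)) = Submodule.colon I (Ideal.span {x, y}) ∧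
    minors2 (Matrix.of ![Fin.cons x u, Fin.cons y v] : Matrix (Fin 2) (Fin (n + 1)) (MvPolynomial (Fin N) K)) = Submodule.colon I (Ideal.span {x}) ∧
    minors2 (Matrix.of ![Fin.cons x u, Fin.cons y v] : Matrix (Fin 2) (Fin (n + 1)) (MvPolynomial (Fin N) K)) = Submodule.colon I (Ideal.span {y}) := by
  have hrow : ∀ (w : Fin 2 → K), w ≠ 0 → ∀ f : Fin (n+1) → K, f ≠ 0 →
      ∑ j, f j • (algebraMap K (MvPolynomial (Fin N) K) (w 0) *
        (Fin.cons x u : Fin (n+1) → MvPolynomial (Fin N) K) j +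
        algebraMap K (MvPolynomial (Fin N) K) (w 1) *
        (Fin.cons y v : Fin (n+1) → MvPolynomial (Fin N) K) j) ≠ 0 := by
    intro w hw f hf
    have := h1g w f hw hf
    rw [Fin.sum_univ_two, ← Finset.sum_add_distrib] at this
    convert this using 3
    simp [Algebra.smul_def]
    ring
  have li0 : LinearIndependent K (Fin.cons x u : Fin (n+1) → MvPolynomial (Fin N) K) := by
    rw [Fintype.linearIndependent_iff]
    intro f hf
    by_contra hne
    have := hrow ![1, 0] (by simp) f (fun e => hne (by simp [e]))
    simp at this
    exact this hf
  have li1 : LinearIndependent K (Fin.cons y v : Fin (n+1) → MvPolynomial (Fin N) K) := by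
    rw [Fintype.linearIndependent_iff]
    intro f hf
    by_contra hne
    have := hrow ![0, 1] (by simp) f (fun e => hne (by simp [e]))
    simp at this
    exact this hf
  have hyx : LinearIndependent K ![y, x] := LinearIndependent.pair_symm_iff.mp hxy
  have hx0 : x ≠ 0 := hxy.ne_zero 0
  have hy0 : y ≠ 0 := hxy.ne_zero 1
  set M : Matrix (Fin 2) (Fin (n + 1)) (MvPolynomial (Fin N) K) :=
    Matrix.of ![Fin.cons x u, Fin.cons y v] with hM
  have hJ : ∀ i j, (Fin.cons x u : Fin (n+1) → MvPolynomial (Fin N) K) i *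
      (Fin.cons y v : Fin (n+1) → MvPolynomial (Fin N) K) j
      - (Fin.cons x u : Fin (n+1) → MvPolynomial (Fin N) K) j *
      (Fin.cons y v : Fin (n+1) → MvPolynomial (Fin N) K) i ∈ minors2 M :=
    fun i j => Ideal.subset_span ⟨(i, j), rfl⟩
  have hgen : ∀ j, x * v j - y * u j ∈ I := fun j => by
    rw [hI]; exact Ideal.subset_span ⟨j, rfl⟩
  have cx : ∀ r, r * x ∈ I → r ∈ minors2 M := by
    intro r hr
    rw [hI] at hr
    exact aux_main x y u v (fun z hz => (mul_eq_zero.mp hz).resolve_left hx0)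
      (aux_pair x y hx hy hxy)
      (aux_reg _ (fun i => by refine Fin.cases ?_ (fun j => ?_) i <;> simp [hx, hu]) li0)
      _ hJ r hr
  have cy : ∀ r, r * y ∈ I → r ∈ minors2 M := by
    intro r hr
    rw [hI] at hr
    refine aux_main y x v u (fun z hz => (mul_eq_zero.mp hz).resolve_left hy0)
      (aux_pair y x hy hx hyx)
      (aux_reg _ (fun i => by refine Fin.cases ?_ (fun j => ?_) i <;> simp [hy, hv]) li1)
      _ (fun i j => ?_) r ?_
    · convert hJ j i using 1; ring
    · refine (Ideal.span_le.mpr ?_) hr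
      rintro _ ⟨j, rfl⟩
      have : x * v j - y * u j = -(y * u j - x * v j) := by ring
      show x * v j - y * u j ∈ _
      rw [this]
      exact neg_mem (Ideal.subset_span ⟨j, rfl⟩)
  have hcol : ∀ i : Fin (n+1), x * (Fin.cons y v : Fin (n+1) → MvPolynomial (Fin N) K) i -
      y * (Fin.cons x u : Fin (n+1) → MvPolynomial (Fin N) K) i ∈ I := by
    intro i
    refine Fin.cases ?_ (fun j => ?_) i
    · simp [mul_comm]
    · simpa using hgen j
  have mx : minors2 M ≤ Submodule.colon I (Ideal.span {x, y}) := by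
    refine Ideal.span_le.mpr ?_
    rintro _ ⟨⟨i, j⟩, rfl⟩
    rw [SetLike.mem_coe, Submodule.mem_colon]
    intro p hp
    obtain ⟨c, d, rfl⟩ := Ideal.mem_span_pair.mp hp
    have hi := hcol i
    have hj := hcol j
    have := add_mem
      (Ideal.mul_mem_left I c (sub_mem (Ideal.mul_mem_left I (M 0 i) hj) (Ideal.mul_mem_left I (M 0 j) hi)))
      (Ideal.mul_mem_left I d (sub_mem (Ideal.mul_mem_left I (M 1 i) hj) (Ideal.mul_mem_left I (M 1 j) hi)))
    convert this using 1
    simp [hM]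
    ring
  have lx : Submodule.colon I (Ideal.span {x, y}) ≤ Submodule.colon I (Ideal.span {x}) :=
    Submodule.colon_mono le_rfl (Ideal.span_mono (by simp))
  have ly : Submodule.colon I (Ideal.span {x, y}) ≤ Submodule.colon I (Ideal.span {y}) :=
    Submodule.colon_mono le_rfl (Ideal.span_mono (by simp))
  have rx : Submodule.colon I (Ideal.span {x}) ≤ minors2 M := fun r hr =>
    cx r (Submodule.mem_colon.mp hr x (Ideal.mem_span_singleton_self x))
  have ry : Submodule.colon I (Ideal.span {y}) ≤ minors2 M := fun r hr =>
    cy r (Submodule.mem_colon.mp hr y (Ideal.mem_span_singleton_self y))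
  exact ⟨le_antisymm mx (lx.trans rx), le_antisymm (mx.trans lx) rx, le_antisymm (mx.trans ly) ry⟩
end
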